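/- Let n ≥ 1, ρ > 0, and let μ = exp(−V(x)) dx be a measure on Euclidean space ℝⁿ, where V : ℝⁿ → ℝ is smooth and the function x ↦ V(x) − (ρ/2)|x|² is convex (i.e. ∇²V ≥ ρ·Id, so that (ℝⁿ,|·|,μ) satisfies CD(ρ,∞)). Then for every k ≥ 1, λ_k^Lip(ℝⁿ,|·|,μ) ≥ λ_k^Lip(ℝⁿ,|·|,γ_ρⁿ). -/

import Mathlib

open MeasureTheory Filter Topology ENNReal

/-- The local Lipschitz constant `|∇f|(x) = limsup_{y→x} |f(y)-f(x)|/d(y,x)`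
(equal to `0` at isolated points, by the convention `Real.sInf ∅ = 0`). -/
noncomputable def localLip {Ω : Type*} [PseudoMetricSpace Ω] (f : Ω → ℝ) (x : Ω) : ℝ :=
  Filter.limsup (fun y => |f y - f x| / dist y x) (nhdsWithin x {x}ᶜ)

/-- Membership in the metric Sobolev space `W^{1,2}_Lip(Ω,d,μ)`. -/
def memW12Lip {Ω : Type*} [PseudoMetricSpace Ω] [MeasurableSpace Ω]
    (μ : Measure Ω) (f : Ω → ℝ) : Prop :=
  LocallyLipschitz f ∧
    (∫⁻ x, ENNReal.ofReal ((f x) ^ 2) ∂μ) + (∫⁻ x, ENNReal.ofReal ((localLip f x) ^ 2) ∂μ) < ⊤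

/-- The `k`-th metric eigenvalue `λ_k^Lip(Ω,d,μ)`: the infimum over `k`-dimensional
linear subspaces `F ⊆ W^{1,2}_Lip` of the supremum of the Rayleigh quotient over `F`. -/
noncomputable def lambdaLip {Ω : Type*} [PseudoMetricSpace Ω] [MeasurableSpace Ω]
    (μ : Measure Ω) (k : ℕ) : ℝ :=
  sInf { a : ℝ | ∃ F : Submodule ℝ (Ω → ℝ), Module.finrank ℝ F = k ∧
    (∀ f ∈ F, memW12Lip μ f) ∧
    a = sSup { r : ℝ | ∃ f ∈ F, (∫ x, (f x) ^ 2 ∂μ) ≠ 0 ∧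
      r = (∫ x, (localLip f x) ^ 2 ∂μ) / (∫ x, (f x) ^ 2 ∂μ) } }

/-- The Gaussian probability measure `γ_ρⁿ` on `ℝⁿ`, with density proportional to
`exp(-ρ|x|²/2)` with respect to Lebesgue measure, normalized to total mass one. -/
noncomputable def gaussRho (n : ℕ) (ρ : ℝ) : Measure (EuclideanSpace ℝ (Fin n)) :=
  ((volume.withDensity fun x : EuclideanSpace ℝ (Fin n) =>
      ENNReal.ofReal (Real.exp (-ρ * ‖x‖ ^ 2 / 2))) Set.univ)⁻¹ •
    volume.withDensity fun x : EuclideanSpace ℝ (Fin n) =>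
      ENNReal.ofReal (Real.exp (-ρ * ‖x‖ ^ 2 / 2))

/-!
A `1`-Lipschitz map `T` pushing a measure `ν` to `μ` can only lower Rayleigh quotients under
`f ↦ f ∘ T`, since `|∇(f ∘ T)| ≤ |∇f| ∘ T`; hence `λ_k(ν) ≤ λ_k(μ)`. It therefore suffices to
transport the Gaussian to the normalized `μ` by such a map (Caffarelli's contraction theorem).

The map is a limit of entropic optimal transports. Let `p` be the Gaussian density and `q` that of
the normalized `μ`, and couple them by Sinkhorn's algorithm for the kernel `exp (κ c ⟪x, y⟫)`, where
`ρ + κ c² = κ`. The scaling on the side of `q` stays `κ`-strongly log-concave: the Laplace transform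
of a `κ`-strongly log-concave weight has a semiconcave logarithm by Prékopa–Leindler, that of a
`(-κ)`-strongly log-convex weight has a strongly convex one by Hölder, and the relation between `ρ`,
`κ` and `c` makes the two half-steps restore each other's constants. Consequently the map sending
`x` to the barycenter of its conditional law, a multiple of the gradient of a log-Laplace transform,
is `c`-Lipschitz with `c ≤ 1`, and these laws have variance at most `dim / κ`. Along the iteration
an entropy functional decreases and is bounded below, so by Pinsker some iterate nearly has both
marginals. The barycentric maps therefore transport `p` to `q` up to an error that vanishes as
`κ → ∞`, and Arzelà–Ascoli yields an exact transport.
-/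

/-! ### The Prékopa–Leindler inequality -/

section BrunnMinkowski

open scoped Pointwise

lemma volume_add_le_volume_add_of_isCompact {K L : Set ℝ} (hK : IsCompact K) (hL : IsCompact L)
    (hK₀ : K.Nonempty) (hL₀ : L.Nonempty) : volume K + volume L ≤ volume (K + L) := by
  obtain ⟨k, hk, k_max⟩ := hK.exists_isGreatest hK₀
  obtain ⟨l, hl, l_min⟩ := hL.exists_isLeast hL₀
  have inter_subset : (· + -l) ⁻¹' K ∩ (· + -k) ⁻¹' L ⊆ {k + l} := by
    rintro x ⟨hxK, hxL⟩
    have := k_max hxK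
    have := l_min hxL
    rw [Set.mem_singleton_iff]
    linarith
  have union_subset : (· + -l) ⁻¹' K ∪ (· + -k) ⁻¹' L ⊆ K + L := by
    rintro x (hx | hx)
    · exact ⟨_, hx, l, hl, by simp⟩
    · exact ⟨k, hk, _, hx, by simp⟩
  calc volume K + volume L
      = volume ((· + -l) ⁻¹' K) + volume ((· + -k) ⁻¹' L) := by
        rw [measure_preimage_add_right, measure_preimage_add_right]
    _ = volume ((· + -l) ⁻¹' K ∪ (· + -k) ⁻¹' L) := by
        refine (measure_union₀' ?_ (measure_mono_null inter_subset (by simp))).symm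
        exact (hK.isClosed.measurableSet.preimage (measurable_add_const _)).nullMeasurableSet
    _ ≤ volume (K + L) := measure_mono union_subset

lemma volume_add_le_volume_add {A B : Set ℝ} (hA : MeasurableSet A) (hB : MeasurableSet B)
    (hA₀ : A.Nonempty) (hB₀ : B.Nonempty) : volume A + volume B ≤ volume (A + B) := by
  obtain ⟨a, ha⟩ := hA₀
  obtain ⟨b, hb⟩ := hB₀
  rw [hA.measure_eq_iSup_isCompact, hB.measure_eq_iSup_isCompact]
  simp only [iSup_and']
  refine ENNReal.biSup_add_biSup_le' ⟨∅, by simp⟩ ⟨∅, by simp⟩ ?_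
  rintro K ⟨hKA, hK⟩ L ⟨hLB, hL⟩
  calc volume K + volume L
      ≤ volume (insert a K) + volume (insert b L) := by gcongr <;> exact Set.subset_insert _ _
    _ ≤ volume (insert a K + insert b L) :=
        volume_add_le_volume_add_of_isCompact (hK.insert a) (hL.insert b)
          (Set.insert_nonempty _ _) (Set.insert_nonempty _ _)
    _ ≤ volume (A + B) := measure_mono <|
        Set.add_subset_add (Set.insert_subset ha hKA) (Set.insert_subset hb hLB)

lemma mul_volume_add_mul_volume_le {s t : ℝ} (hs : 0 ≤ s) (ht : 0 ≤ t) {A B : Set ℝ}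
    (hA : MeasurableSet A) (hB : MeasurableSet B) (hA₀ : A.Nonempty) (hB₀ : B.Nonempty) :
    ENNReal.ofReal s * volume A + ENNReal.ofReal t * volume B ≤ volume (s • A + t • B) := by
  have volume_smul {r : ℝ} (hr : 0 ≤ r) (S : Set ℝ) :
      ENNReal.ofReal r * volume S = volume (r • S) := by
    simp [Measure.addHaar_smul, abs_of_nonneg hr]
  rw [volume_smul hs, volume_smul ht]
  exact volume_add_le_volume_add (hA.const_smul₀ s) (hB.const_smul₀ t) hA₀.smul_set
    hB₀.smul_set

end BrunnMinkowski

section PrekopaLeindler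

/-- The Prékopa–Leindler inequality with weights `s` and `t` for the measure `μ`, as a property of
`μ`, so that it can be transported along linear maps and tensorized. -/
def PrekopaLeindler {E : Type*} [AddCommGroup E] [Module ℝ E] [MeasurableSpace E] (s t : ℝ)
    (μ : Measure E) : Prop :=
  ∀ ⦃f g h : E → ℝ≥0∞⦄, Measurable f → Measurable g → Measurable h →
    (∀ x y, f x ^ s * g y ^ t ≤ h (s • x + t • y)) →
    (∫⁻ x, f x ∂μ) ^ s * (∫⁻ x, g x ∂μ) ^ t ≤ ∫⁻ x, h x ∂μ

lemma ennreal_geom_mean_le_arith_mean {s t : ℝ} (hs : 0 < s) (ht : 0 < t) (hst : s + t = 1)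
    (a b : ℝ≥0∞) : a ^ s * b ^ t ≤ ENNReal.ofReal s * a + ENNReal.ofReal t * b := by
  have conjugate : (s⁻¹).HolderConjugate t⁻¹ := Real.holderConjugate_iff.2
    ⟨(one_lt_inv₀ hs).2 (by linarith), by simpa using hst⟩
  have young := ENNReal.young_inequality (a ^ s) (b ^ t) conjugate
  rwa [← ENNReal.rpow_mul, ← ENNReal.rpow_mul, mul_inv_cancel₀ hs.ne', mul_inv_cancel₀ ht.ne',
    ENNReal.rpow_one, ENNReal.rpow_one, ENNReal.ofReal_inv_of_pos hs, ENNReal.ofReal_inv_of_pos ht,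
    ENNReal.div_eq_inv_mul, ENNReal.div_eq_inv_mul, inv_inv, inv_inv] at young

lemma lintegral_eq_lintegral_measure_ofReal_lt {α : Type*} [MeasurableSpace α] {μ : Measure α}
    {f : α → ℝ≥0∞} (hf : Measurable f) (hf_top : ∀ x, f x ≠ ⊤) :
    ∫⁻ x, f x ∂μ = ∫⁻ τ in Set.Ioi (0 : ℝ), μ {x | ENNReal.ofReal τ < f x} := by
  calc ∫⁻ x, f x ∂μ = ∫⁻ x, ENNReal.ofReal (f x).toReal ∂μ := by
        simp only [ENNReal.ofReal_toReal (hf_top _)]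
    _ = ∫⁻ τ in Set.Ioi (0 : ℝ), μ {x | τ < (f x).toReal} :=
        lintegral_eq_lintegral_meas_lt μ (Eventually.of_forall fun _ => ENNReal.toReal_nonneg)
          hf.ennreal_toReal.aemeasurable
    _ = ∫⁻ τ in Set.Ioi (0 : ℝ), μ {x | ENNReal.ofReal τ < f x} := by
        refine setLIntegral_congr_fun measurableSet_Ioi fun τ hτ => ?_
        simp only [ENNReal.ofReal_lt_iff_lt_toReal (le_of_lt hτ) (hf_top _)]

variable {s t : ℝ} {f g h : ℝ → ℝ≥0∞}

open scoped Pointwise in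
lemma superlevel_add_subset (hs : 0 < s) (ht : 0 < t) (hst : s + t = 1)
    (H : ∀ x y, f x ^ s * g y ^ t ≤ h (s • x + t • y)) {τ : ℝ} (hτ : 0 < τ) :
    s • {x | ENNReal.ofReal τ < f x} + t • {x | ENNReal.ofReal τ < g x} ⊆
      {x | ENNReal.ofReal τ < h x} := by
  rintro _ ⟨_, ⟨x, hx, rfl⟩, _, ⟨y, hy, rfl⟩, rfl⟩
  calc ENNReal.ofReal τ = ENNReal.ofReal τ ^ s * ENNReal.ofReal τ ^ t := by
        rw [← ENNReal.rpow_add _ _ (by simpa using hτ) ENNReal.ofReal_ne_top, hst,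
          ENNReal.rpow_one]
    _ < f x ^ s * g y ^ t := ENNReal.mul_lt_mul (ENNReal.rpow_lt_rpow hx hs)
        (ENNReal.rpow_lt_rpow hy ht)
    _ ≤ h (s • x + t • y) := H x y

lemma mul_lintegral_add_mul_lintegral_le_of_iSup_eq_one (hs : 0 < s) (ht : 0 < t)
    (hst : s + t = 1) (hf : Measurable f) (hg : Measurable g) (hh : Measurable h)
    (hf_sup : ⨆ x, f x = 1) (hg_sup : ⨆ x, g x = 1)
    (H : ∀ x y, f x ^ s * g y ^ t ≤ h (s • x + t • y)) :
    ENNReal.ofReal s * (∫⁻ x, f x) + ENNReal.ofReal t * (∫⁻ x, g x) ≤ ∫⁻ x, h x := by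
  have hf_le (x) : f x ≤ 1 := hf_sup ▸ le_iSup f x
  have hg_le (x) : g x ≤ 1 := hg_sup ▸ le_iSup g x
  have H_trunc (x y) : f x ^ s * g y ^ t ≤ min (h (s • x + t • y)) 1 :=
    le_min (H x y) (mul_le_one' (ENNReal.rpow_le_one (hf_le x) hs.le)
      (ENNReal.rpow_le_one (hg_le y) ht.le))
  have superlevel_measurable (u : ℝ → ℝ≥0∞) :
      Measurable fun τ : ℝ => volume {x | ENNReal.ofReal τ < u x} :=
    Antitone.measurable fun _ _ hle => measure_mono fun _ hx =>
      (ENNReal.ofReal_le_ofReal hle).trans_lt hx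
  refine le_trans ?_ (lintegral_mono fun x => min_le_left (h x) 1)
  rw [lintegral_eq_lintegral_measure_ofReal_lt hf fun x => ne_top_of_le_ne_top one_ne_top (hf_le x),
    lintegral_eq_lintegral_measure_ofReal_lt hg fun x => ne_top_of_le_ne_top one_ne_top (hg_le x),
    lintegral_eq_lintegral_measure_ofReal_lt (hh.min measurable_const) fun x =>
      ne_top_of_le_ne_top one_ne_top (min_le_right _ _),
    ← lintegral_const_mul _ (superlevel_measurable f),
    ← lintegral_const_mul _ (superlevel_measurable g),
    ← lintegral_add_left ((superlevel_measurable f).const_mul _)]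
  refine setLIntegral_mono' measurableSet_Ioi fun τ hτ => ?_
  rcases lt_or_ge (ENNReal.ofReal τ) 1 with hlt | hge
  · have nonempty {u : ℝ → ℝ≥0∞} (hu : ⨆ x, u x = 1) :
        {x | ENNReal.ofReal τ < u x}.Nonempty := by
      obtain ⟨x, hx⟩ := lt_iSup_iff.1 (hu ▸ hlt)
      exact ⟨x, hx⟩
    exact (mul_volume_add_mul_volume_le hs.le ht.le (measurableSet_lt measurable_const hf)
      (measurableSet_lt measurable_const hg) (nonempty hf_sup) (nonempty hg_sup)).trans
      (measure_mono (superlevel_add_subset hs ht hst H_trunc hτ))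
  · simp [((hf_le _).trans hge).not_gt, ((hg_le _).trans hge).not_gt]

lemma lintegral_rpow_mul_lintegral_rpow_le_of_iSup_ne_top (hs : 0 < s) (ht : 0 < t)
    (hst : s + t = 1) (hf : Measurable f) (hg : Measurable g) (hh : Measurable h)
    (hf_top : ⨆ x, f x ≠ ⊤) (hg_top : ⨆ x, g x ≠ ⊤)
    (H : ∀ x y, f x ^ s * g y ^ t ≤ h (s • x + t • y)) :
    (∫⁻ x, f x) ^ s * (∫⁻ x, g x) ^ t ≤ ∫⁻ x, h x := by
  set A := ⨆ x, f x
  set B := ⨆ x, g x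
  rcases eq_or_ne A 0 with hA | hA
  · simp [ENNReal.iSup_eq_zero.1 hA, hs]
  rcases eq_or_ne B 0 with hB | hB
  · simp [ENNReal.iSup_eq_zero.1 hB, ht]
  have hA_ne : A ^ s ≠ 0 := (ENNReal.rpow_pos (pos_iff_ne_zero.2 hA) hf_top).ne'
  have hB_ne : B ^ t ≠ 0 := (ENNReal.rpow_pos (pos_iff_ne_zero.2 hB) hg_top).ne'
  have hA_top : A ^ s ≠ ⊤ := ENNReal.rpow_ne_top_of_nonneg hs.le hf_top
  have hB_top : B ^ t ≠ ⊤ := ENNReal.rpow_ne_top_of_nonneg ht.le hg_top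
  have scale {u : ℝ → ℝ≥0∞} (hu : Measurable u) (c : ℝ≥0∞) :
      ∫⁻ x, u x / c = (∫⁻ x, u x) / c := by
    simp only [div_eq_mul_inv, lintegral_mul_const _ hu]
  have mul_div_mul (a b : ℝ≥0∞) :
      (a / A) ^ s * (b / B) ^ t = a ^ s * b ^ t / (A ^ s * B ^ t) := by
    rw [ENNReal.div_rpow_of_nonneg _ _ hs.le, ENNReal.div_rpow_of_nonneg _ _ ht.le,
      div_eq_mul_inv, div_eq_mul_inv, div_eq_mul_inv, mul_mul_mul_comm,
      ENNReal.mul_inv (.inr hB_top) (.inr hB_ne)]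
  have normalized := mul_lintegral_add_mul_lintegral_le_of_iSup_eq_one hs ht hst
    (hf.div_const A) (hg.div_const B) (hh.div_const (A ^ s * B ^ t))
    (by rw [← ENNReal.iSup_div, ENNReal.div_self hA hf_top])
    (by rw [← ENNReal.iSup_div, ENNReal.div_self hB hg_top])
    fun x y => by
      rw [mul_div_mul]
      exact ENNReal.div_le_div_right (H x y) _
  have := (ennreal_geom_mean_le_arith_mean hs ht hst _ _).trans normalized
  rw [scale hf, scale hg, scale hh, mul_div_mul] at this
  rwa [div_eq_mul_inv, div_eq_mul_inv, ENNReal.mul_le_mul_iff_left] at this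
  · exact ENNReal.inv_ne_zero.2 (ENNReal.mul_ne_top hA_top hB_top)
  · exact ENNReal.inv_ne_top.2 (mul_ne_zero hA_ne hB_ne)

lemma lintegral_eq_iSup_lintegral_min {α : Type*} [MeasurableSpace α] {μ : Measure α}
    {f : α → ℝ≥0∞} (hf : Measurable f) :
    ∫⁻ x, f x ∂μ = ⨆ N : ℕ, ∫⁻ x, min (f x) N ∂μ := by
  rw [← lintegral_iSup fun N => hf.min measurable_const]
  · simp only [← inf_iSup_eq, ENNReal.iSup_natCast, inf_top_eq]
  · exact fun N M hNM x => min_le_min le_rfl (by exact_mod_cast hNM)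

lemma prekopaLeindler_real (hs : 0 < s) (ht : 0 < t) (hst : s + t = 1) :
    PrekopaLeindler s t (volume : Measure ℝ) := by
  intro f g h hf hg hh H
  have rpow_iSup {r : ℝ} (hr : 0 < r) (u : ℕ → ℝ≥0∞) : (⨆ N, u N) ^ r = ⨆ N, u N ^ r :=
    (ENNReal.orderIsoRpow r hr).map_iSup u
  rw [lintegral_eq_iSup_lintegral_min hf, lintegral_eq_iSup_lintegral_min hg, rpow_iSup hs,
    rpow_iSup ht, ENNReal.iSup_mul]
  refine iSup_le fun N => ?_
  rw [ENNReal.mul_iSup]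
  refine iSup_le fun M => ?_
  have bounded (u : ℝ → ℝ≥0∞) (L : ℕ) : ⨆ x, min (u x) L ≠ ⊤ :=
    ne_top_of_le_ne_top (natCast_ne_top L) (iSup_le fun x => min_le_right _ _)
  refine lintegral_rpow_mul_lintegral_rpow_le_of_iSup_ne_top hs ht hst (hf.min measurable_const)
    (hg.min measurable_const) hh (bounded f N) (bounded g M) fun x y => ?_
  exact le_trans (by gcongr <;> exact min_le_left _ _) (H x y)

variable {E F : Type*} [AddCommGroup E] [Module ℝ E] [MeasurableSpace E] [AddCommGroup F]
  [Module ℝ F] [MeasurableSpace F] {μ : Measure E} {ν : Measure F}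

lemma PrekopaLeindler.prod [SFinite μ] [SFinite ν] (hμ : PrekopaLeindler s t μ)
    (hν : PrekopaLeindler s t ν) : PrekopaLeindler s t (μ.prod ν) := by
  intro f g h hf hg hh H
  rw [lintegral_prod _ hf.aemeasurable, lintegral_prod _ hg.aemeasurable,
    lintegral_prod _ hh.aemeasurable]
  refine hμ hf.lintegral_prod_right' hg.lintegral_prod_right' hh.lintegral_prod_right'
    fun x x' => ?_
  exact hν (hf.comp measurable_prodMk_left) (hg.comp measurable_prodMk_left)
    (hh.comp measurable_prodMk_left) fun y y' => H (x, y) (x', y')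

lemma PrekopaLeindler.of_measurePreserving {T : E →ₗ[ℝ] F} (hT : MeasurePreserving T μ ν)
    (hμ : PrekopaLeindler s t μ) : PrekopaLeindler s t ν := by
  intro f g h hf hg hh H
  rw [← hT.lintegral_comp hf, ← hT.lintegral_comp hg, ← hT.lintegral_comp hh]
  refine hμ (hf.comp hT.measurable) (hg.comp hT.measurable) (hh.comp hT.measurable) fun x y => ?_
  simpa only [map_add, map_smul, Function.comp_apply] using H (T x) (T y)

lemma prekopaLeindler_pi (hs : 0 < s) (ht : 0 < t) (hst : s + t = 1) (n : ℕ) :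
    PrekopaLeindler s t (volume : Measure (Fin n → ℝ)) := by
  induction n with
  | zero =>
    intro f g h _ _ _ H
    have volume_univ : (volume : Measure (Fin 0 → ℝ)) Set.univ = 1 := by
      rw [volume_pi, Measure.pi_of_empty, Measure.dirac_apply_of_mem (Set.mem_univ _)]
    simpa only [lintegral_unique, volume_univ, mul_one, Subsingleton.elim _ (default : Fin 0 → ℝ)]
      using H default default
  | succ n ih =>
    have cons_preserving : MeasurePreserving
        (Fin.consLinearEquiv ℝ fun _ : Fin (n + 1) => ℝ).toLinearMap volume volume := by
      have insertNth_preserving :=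
        (volume_preserving_piFinSuccAbove (fun _ : Fin (n + 1) => ℝ) 0).symm _
      have coe_eq : ⇑(Fin.consLinearEquiv ℝ fun _ : Fin (n + 1) => ℝ).toLinearMap =
          (MeasurableEquiv.piFinSuccAbove (fun _ : Fin (n + 1) => ℝ) 0).symm := by
        ext p i
        simp [MeasurableEquiv.piFinSuccAbove, Fin.insertNthEquiv]
      rwa [← coe_eq] at insertNth_preserving
    exact .of_measurePreserving cons_preserving ((prekopaLeindler_real hs ht hst).prod ih)

lemma prekopaLeindler_volume {E : Type*} [NormedAddCommGroup E] [InnerProductSpace ℝ E]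
    [FiniteDimensional ℝ E] [MeasurableSpace E] [BorelSpace E] (hs : 0 < s) (ht : 0 < t)
    (hst : s + t = 1) : PrekopaLeindler s t (volume : Measure E) := by
  set basis := stdOrthonormalBasis ℝ E
  exact PrekopaLeindler.of_measurePreserving
    (T := (basis.repr.symm.toLinearEquiv : _ →ₗ[ℝ] E) ∘ₗ
      (WithLp.linearEquiv 2 ℝ (Fin (Module.finrank ℝ E) → ℝ)).symm.toLinearMap)
    (basis.measurePreserving_repr_symm.comp
      ((EuclideanSpace.volume_preserving_symm_measurableEquiv_toLp _).symm _))
    (prekopaLeindler_pi hs ht hst _)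

end PrekopaLeindler

/-! ### Subgradients of semiconcave functions -/

section Subgradient

variable {E : Type*} [NormedAddCommGroup E] [InnerProductSpace ℝ E] {L : E → ℝ} {S : E → E} {a : ℝ}

lemma le_add_inner_add_sq_of_strongConcaveOn_neg (hL : StrongConcaveOn Set.univ (-a) L) {x : E}
    (hS : ∀ v, L x + inner ℝ v (S x) ≤ L (x + v)) (v : E) :
    L (x + v) ≤ L x + inner ℝ v (S x) + a / 2 * ‖v‖ ^ 2 := by
  -- `x` lies between `x + v` and `x - t • v`; the subgradient bounds `L (x - t • v)` from below.
  have le_of_pos (t : ℝ) (ht : 0 < t) :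
      L (x + v) ≤ L x + inner ℝ v (S x) + (1 + t) * (a / 2 * ‖v‖ ^ 2) := by
    have concave := hL.2 (Set.mem_univ (x + v)) (Set.mem_univ (x + -(t • v)))
      (by positivity : 0 ≤ t / (1 + t)) (by positivity : 0 ≤ 1 / (1 + t)) (by field_simp; ring)
    have combination : (t / (1 + t)) • (x + v) + (1 / (1 + t)) • (x + -(t • v)) = x := by
      match_scalars <;> field_simp <;> ring
    have norm_diff : ‖x + v - (x + -(t • v))‖ = (1 + t) * ‖v‖ := by
      rw [show x + v - (x + -(t • v)) = (1 + t) • v by module, norm_smul,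
        Real.norm_of_nonneg (by positivity)]
    have subgradient := hS (-(t • v))
    rw [inner_neg_left, real_inner_smul_left] at subgradient
    rw [combination, norm_diff, smul_eq_mul, smul_eq_mul] at concave
    field_simp at concave
    nlinarith
  have limit : Tendsto (fun t : ℝ => L x + inner ℝ v (S x) + (1 + t) * (a / 2 * ‖v‖ ^ 2)) (𝓝[>] 0)
      (𝓝 (L x + inner ℝ v (S x) + (1 + 0) * (a / 2 * ‖v‖ ^ 2))) :=
    (Continuous.tendsto (by fun_prop) 0).mono_left nhdsWithin_le_nhds
  simpa using ge_of_tendsto limit (eventually_mem_nhdsWithin.mono le_of_pos)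

lemma sub_le_inner_sub_sq_of_strongConcaveOn_neg (ha : 0 < a)
    (hL : StrongConcaveOn Set.univ (-a) L) (hS : ∀ x v, L x + inner ℝ v (S x) ≤ L (x + v))
    (x y : E) : L y - L x ≤ inner ℝ (y - x) (S y) - ‖S x - S y‖ ^ 2 / (2 * a) := by
  -- Compare the upper bound at `x` with the subgradient bound at `y`, at the point minimizing
  -- the difference of the two.
  set D := S x - S y
  have upper := le_add_inner_add_sq_of_strongConcaveOn_neg hL (hS x) (-(a⁻¹ • D))
  have lower := hS y (x + -(a⁻¹ • D) - y)
  have inner_D : inner ℝ D (S x) - inner ℝ D (S y) = ‖D‖ ^ 2 := by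
    rw [← inner_sub_right, real_inner_self_eq_norm_sq]
  rw [add_sub_cancel, add_sub_right_comm, inner_add_left, ← neg_sub y x, inner_neg_left,
    inner_neg_left, real_inner_smul_left] at lower
  rw [norm_neg, norm_smul, mul_pow, inner_neg_left, real_inner_smul_left, Real.norm_eq_abs,
    sq_abs] at upper
  have combined : L y - L x ≤ inner ℝ (y - x) (S y) -
      a⁻¹ * (inner ℝ D (S x) - inner ℝ D (S y)) + a / 2 * (a⁻¹ ^ 2 * ‖D‖ ^ 2) := by linarith
  rw [inner_D] at combined
  convert combined using 1
  field_simp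
  ring

lemma lipschitz_subgradient_of_strongConcaveOn_neg (ha : 0 < a)
    (hL : StrongConcaveOn Set.univ (-a) L) (hS : ∀ x v, L x + inner ℝ v (S x) ≤ L (x + v))
    (x y : E) : ‖S x - S y‖ ≤ a * ‖x - y‖ := by
  have hxy := sub_le_inner_sub_sq_of_strongConcaveOn_neg ha hL hS x y
  have hyx := sub_le_inner_sub_sq_of_strongConcaveOn_neg ha hL hS y x
  rw [norm_sub_rev (S y)] at hyx
  have cocoercive : ‖S x - S y‖ ^ 2 / a ≤ ‖x - y‖ * ‖S x - S y‖ := by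
    calc ‖S x - S y‖ ^ 2 / a = ‖S x - S y‖ ^ 2 / (2 * a) + ‖S x - S y‖ ^ 2 / (2 * a) := by
          field_simp
          ring
      _ ≤ inner ℝ (y - x) (S y) + inner ℝ (x - y) (S x) := by linarith
      _ = inner ℝ (x - y) (S x - S y) := by
          rw [inner_sub_right, ← neg_sub x y, inner_neg_left]
          ring
      _ ≤ ‖x - y‖ * ‖S x - S y‖ := real_inner_le_norm _ _
  rw [div_le_iff₀ ha] at cocoercive
  rcases (norm_nonneg (S x - S y)).eq_or_lt' with h | h
  · rw [h]
    positivity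
  · nlinarith

end Subgradient

/-! ### Weights with Gaussian decay -/

section Weights

variable {E : Type*} [NormedAddCommGroup E] [MeasurableSpace E]

/-- A positive measurable weight bounded by a multiple of some centered Gaussian density. -/
structure IsGaussianDominated (G : E → ℝ) : Prop where
  measurable : Measurable G
  pos : ∀ y, 0 < G y
  bound : ∃ C a : ℝ, 0 < a ∧ ∀ y, G y ≤ C * Real.exp (-a * ‖y‖ ^ 2)

/-- A measurable function growing at most exponentially, hence integrable against every
Gaussian dominated weight. -/
structure HasExpGrowth (h : E → ℝ) : Prop where
  measurable : Measurable h
  bound : ∃ C R : ℝ, 0 ≤ C ∧ 0 ≤ R ∧ ∀ y, |h y| ≤ C * Real.exp (R * ‖y‖)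

variable {G h k : E → ℝ}

namespace HasExpGrowth

lemma of_abs_le (hm : Measurable h) (hk : HasExpGrowth k) (hle : ∀ y, |h y| ≤ k y) :
    HasExpGrowth h :=
  ⟨hm, let ⟨C, R, hC, hR, bound⟩ := hk.bound
    ⟨C, R, hC, hR, fun y => (hle y).trans ((le_abs_self _).trans (bound y))⟩⟩

lemma const (c : ℝ) : HasExpGrowth fun _ : E => c :=
  ⟨measurable_const, |c|, 0, abs_nonneg c, le_rfl, fun y => by simp⟩

lemma mul (hh : HasExpGrowth h) (hk : HasExpGrowth k) : HasExpGrowth fun y => h y * k y := by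
  obtain ⟨C, R, hC, hR, hbound⟩ := hh.bound
  obtain ⟨C', R', hC', hR', kbound⟩ := hk.bound
  refine ⟨hh.measurable.mul hk.measurable, C * C', R + R', by positivity, by positivity,
    fun y => ?_⟩
  rw [abs_mul, add_mul, Real.exp_add, mul_mul_mul_comm]
  exact mul_le_mul (hbound y) (kbound y) (abs_nonneg _) (by positivity)

lemma add (hh : HasExpGrowth h) (hk : HasExpGrowth k) : HasExpGrowth fun y => h y + k y := by
  obtain ⟨C, R, hC, hR, hbound⟩ := hh.bound
  obtain ⟨C', R', hC', hR', kbound⟩ := hk.bound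
  refine ⟨hh.measurable.add hk.measurable, C + C', R + R', by positivity, by positivity,
    fun y => ?_⟩
  calc |h y + k y| ≤ |h y| + |k y| := abs_add_le _ _
    _ ≤ C * Real.exp (R * ‖y‖) + C' * Real.exp (R' * ‖y‖) := add_le_add (hbound y) (kbound y)
    _ ≤ C * Real.exp ((R + R') * ‖y‖) + C' * Real.exp ((R + R') * ‖y‖) := by
        gcongr <;> linarith
    _ = (C + C') * Real.exp ((R + R') * ‖y‖) := by ring

variable [OpensMeasurableSpace E]

lemma norm : HasExpGrowth fun y : E => ‖y‖ :=
  ⟨measurable_norm, 1, 1, zero_le_one, zero_le_one, fun y => by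
    rw [abs_norm, one_mul, one_mul]
    linarith [Real.add_one_le_exp ‖y‖]⟩

lemma norm_sub (m : E) : HasExpGrowth fun y => ‖y - m‖ :=
  of_abs_le (Continuous.measurable (by fun_prop)) (norm.add (const ‖m‖)) fun y => by
    rw [abs_norm]
    exact norm_sub_le y m

variable [InnerProductSpace ℝ E]

lemma inner_left (x : E) : HasExpGrowth fun y => inner ℝ x y :=
  of_abs_le (Continuous.measurable (by fun_prop)) ((const ‖x‖).mul norm) fun y =>
    abs_real_inner_le_norm x y

lemma exp_mul_inner (b : ℝ) (x : E) : HasExpGrowth fun y => Real.exp (b * inner ℝ x y) := by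
  refine ⟨Continuous.measurable (by fun_prop), 1, |b| * ‖x‖, zero_le_one, by positivity,
    fun y => ?_⟩
  rw [Real.abs_exp, one_mul, Real.exp_le_exp]
  calc b * inner ℝ x y ≤ |b| * |inner ℝ x y| := (le_abs_self _).trans_eq (abs_mul _ _)
    _ ≤ |b| * (‖x‖ * ‖y‖) := by gcongr; exact abs_real_inner_le_norm x y
    _ = |b| * ‖x‖ * ‖y‖ := by ring

lemma inner_sub (v m : E) : HasExpGrowth fun y => inner ℝ v (y - m) := by
  simp only [inner_sub_right, sub_eq_add_neg (inner ℝ v _)]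
  exact (inner_left v).add (const _)

lemma exp_mul_inner_sub (b : ℝ) (v m : E) :
    HasExpGrowth fun y => Real.exp (b * inner ℝ v (y - m)) := by
  simp only [inner_sub_right, mul_sub, Real.exp_sub, div_eq_mul_inv]
  exact (exp_mul_inner b v).mul (const _)

end HasExpGrowth

lemma neg_mul_sq_add_mul_le {a : ℝ} (ha : 0 < a) (R r : ℝ) :
    -a * r ^ 2 + R * r ≤ R ^ 2 / (2 * a) + -(a / 2) * r ^ 2 := by
  have : R ^ 2 / (2 * a) + -(a / 2) * r ^ 2 - (-a * r ^ 2 + R * r) = (a * r - R) ^ 2 / (2 * a) := by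
    field_simp
    ring
  have : 0 ≤ (a * r - R) ^ 2 / (2 * a) := by positivity
  linarith

lemma integrable_exp_neg_mul_sq_norm [InnerProductSpace ℝ E] [FiniteDimensional ℝ E]
    [BorelSpace E] {a : ℝ} (ha : 0 < a) : Integrable fun y : E => Real.exp (-a * ‖y‖ ^ 2) := by
  refine (GaussianFourier.integrable_cexp_neg_mul_sq_norm_add (V := E) (b := (a : ℂ))
    (by simpa using ha) 0 0).norm.congr (Eventually.of_forall fun y => ?_)
  simp [Complex.norm_exp, ← Complex.ofReal_pow]

namespace IsGaussianDominated

lemma exists_abs_mul_le (hG : IsGaussianDominated G) (hh : HasExpGrowth h) :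
    ∃ C a : ℝ, 0 < a ∧ ∀ y, |G y * h y| ≤ C * Real.exp (-a * ‖y‖ ^ 2) := by
  obtain ⟨C, a, ha, G_le⟩ := hG.bound
  obtain ⟨C', R, hC', -, h_le⟩ := hh.bound
  have hC : 0 ≤ C := by
    simpa using (hG.pos 0).le.trans (G_le 0)
  refine ⟨C * C' * Real.exp (R ^ 2 / (2 * a)), a / 2, half_pos ha, fun y => ?_⟩
  calc |G y * h y| = G y * |h y| := by rw [abs_mul, abs_of_pos (hG.pos y)]
    _ ≤ C * Real.exp (-a * ‖y‖ ^ 2) * (C' * Real.exp (R * ‖y‖)) :=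
        mul_le_mul (G_le y) (h_le y) (abs_nonneg _) (by positivity)
    _ = C * C' * Real.exp (-a * ‖y‖ ^ 2 + R * ‖y‖) := by rw [Real.exp_add]; ring
    _ ≤ C * C' * Real.exp (R ^ 2 / (2 * a) + -(a / 2) * ‖y‖ ^ 2) := by
        gcongr C * C' * Real.exp ?_
        exact neg_mul_sq_add_mul_le ha _ _
    _ = C * C' * Real.exp (R ^ 2 / (2 * a)) * Real.exp (-(a / 2) * ‖y‖ ^ 2) := by
        rw [Real.exp_add]; ring

lemma mul (hG : IsGaussianDominated G) (hh : HasExpGrowth h) (h_pos : ∀ y, 0 < h y) :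
    IsGaussianDominated fun y => G y * h y :=
  ⟨hG.measurable.mul hh.measurable, fun y => mul_pos (hG.pos y) (h_pos y),
    let ⟨C, a, ha, bound⟩ := hG.exists_abs_mul_le hh
    ⟨C, a, ha, fun y => (le_abs_self _).trans (bound y)⟩⟩

lemma const_mul (hG : IsGaussianDominated G) {c : ℝ} (hc : 0 < c) :
    IsGaussianDominated fun y => c * G y := by
  simp only [mul_comm c]
  exact hG.mul (.const c) fun _ => hc

lemma exp_neg_mul_sq_norm [OpensMeasurableSpace E] {a : ℝ} (ha : 0 < a) :
    IsGaussianDominated fun y : E => Real.exp (-a * ‖y‖ ^ 2) :=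
  ⟨Continuous.measurable (by fun_prop), fun _ => Real.exp_pos _, 1, a, ha, fun _ => by rw [one_mul]⟩

variable [InnerProductSpace ℝ E] [FiniteDimensional ℝ E] [BorelSpace E]

lemma integrable_mul (hG : IsGaussianDominated G) (hh : HasExpGrowth h) :
    Integrable fun y => G y * h y := by
  obtain ⟨C, a, ha, bound⟩ := hG.exists_abs_mul_le hh
  exact ((integrable_exp_neg_mul_sq_norm ha).const_mul C).mono'
    (hG.measurable.mul hh.measurable).aestronglyMeasurable (Eventually.of_forall bound)

lemma integrable (hG : IsGaussianDominated G) : Integrable G := by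
  simpa using hG.integrable_mul (.const 1)

end IsGaussianDominated

end Weights

section Integral

variable {α : Type*} [MeasurableSpace α] {μ : Measure α}

lemma integral_pos_of_forall_pos [NeZero μ] {f : α → ℝ} (hf : Integrable f μ)
    (f_pos : ∀ x, 0 < f x) : 0 < ∫ x, f x ∂μ := by
  rw [integral_pos_iff_support_of_nonneg (fun x => (f_pos x).le) hf,
    Function.support_eq_univ fun x => (f_pos x).ne']
  exact Measure.measure_univ_pos.2 (NeZero.ne μ)

lemma integral_mul_exp_mean_le_integral_mul_exp {w h : α → ℝ} (hw : ∀ x, 0 ≤ w x)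
    (w_int : Integrable w μ) (wh_int : Integrable (fun x => w x * h x) μ)
    (wexp_int : Integrable (fun x => w x * Real.exp (h x)) μ) (hw_pos : 0 < ∫ x, w x ∂μ) :
    (∫ x, w x ∂μ) * Real.exp ((∫ x, w x * h x ∂μ) / ∫ x, w x ∂μ)
      ≤ ∫ x, w x * Real.exp (h x) ∂μ := by
  set m := ∫ x, w x ∂μ
  set z := (∫ x, w x * h x ∂μ) / m with hz
  calc m * Real.exp z = ∫ x, Real.exp z * (w x * h x + (1 - z) * w x) ∂μ := by
        rw [integral_const_mul, integral_add wh_int (w_int.const_mul _), integral_const_mul,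
          ← mul_div_cancel₀ (∫ x, w x * h x ∂μ) hw_pos.ne', ← hz]
        ring
    _ ≤ ∫ x, w x * Real.exp (h x) ∂μ := by
        refine integral_mono ((wh_int.add (w_int.const_mul _)).const_mul _) wexp_int fun x => ?_
        calc Real.exp z * (w x * h x + (1 - z) * w x) = w x * (Real.exp z * (h x - z + 1)) := by
              ring
          _ ≤ w x * (Real.exp z * Real.exp (h x - z)) := by
              gcongr
              exacts [hw x, Real.add_one_le_exp _]
          _ = w x * Real.exp (h x) := by rw [← Real.exp_add, add_sub_cancel]

end Integral

/-! ### Laplace transforms of Gaussian dominated weights -/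

section Laplace

variable {E : Type*} [NormedAddCommGroup E] [InnerProductSpace ℝ E]

/-- The exponentially tilted weight `y ↦ G y * exp (b ⟪x, y⟫)`. -/
noncomputable def tilt (b : ℝ) (G : E → ℝ) (x y : E) : ℝ := G y * Real.exp (b * inner ℝ x y)

lemma tilt_add_left (b : ℝ) (G : E → ℝ) (x v y : E) :
    tilt b G (x + v) y = tilt b G x y * Real.exp (b * inner ℝ v y) := by
  rw [tilt, tilt, inner_add_left, mul_add, Real.exp_add, mul_assoc]

lemma mul_tilt_comm (b : ℝ) (F G : E → ℝ) (x y : E) : F x * tilt b G x y = G y * tilt b F y x := by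
  rw [tilt, tilt, real_inner_comm, mul_left_comm]

variable [MeasurableSpace E]

lemma measurable_uncurry_tilt [FiniteDimensional ℝ E] [BorelSpace E] (b : ℝ) {G : E → ℝ}
    (hG : Measurable G) : Measurable (Function.uncurry (tilt b G)) :=
  (hG.comp measurable_snd).mul (Continuous.measurable (by fun_prop))

lemma IsGaussianDominated.tilted [OpensMeasurableSpace E] {G : E → ℝ} (hG : IsGaussianDominated G)
    (b : ℝ) (x : E) : IsGaussianDominated (tilt b G x) :=
  hG.mul (.exp_mul_inner b x) fun _ => Real.exp_pos _

variable [FiniteDimensional ℝ E] [BorelSpace E]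

/-- The Laplace transform of the weight `G`, evaluated at `b • x`. -/
noncomputable def laplace (b : ℝ) (G : E → ℝ) (x : E) : ℝ := ∫ y, tilt b G x y

/-- The barycenter of the probability measure proportional to `tilt b G x`; it is `b⁻¹` times the
gradient of `log ∘ laplace b G`. -/
noncomputable def tiltedMean (b : ℝ) (G : E → ℝ) (x : E) : E :=
  (laplace b G x)⁻¹ • ∫ y, tilt b G x y • y

namespace IsGaussianDominated

variable {G w : E → ℝ}

lemma measurable_laplace (hG : IsGaussianDominated G) (b : ℝ) : Measurable (laplace b G) :=
  (measurable_uncurry_tilt b hG.measurable).stronglyMeasurable.integral_prod_right.measurable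

lemma laplace_pos (hG : IsGaussianDominated G) (b : ℝ) (x : E) : 0 < laplace b G x :=
  integral_pos_of_forall_pos (hG.tilted b x).integrable (hG.tilted b x).pos

lemma integral_tilt_mul_inner (hG : IsGaussianDominated G) (b : ℝ) (x v : E) :
    ∫ y, tilt b G x y * inner ℝ v y = laplace b G x * inner ℝ v (tiltedMean b G x) := by
  have smul_int : Integrable fun y => tilt b G x y • y :=
    ((hG.tilted b x).integrable_mul .norm).mono'
      ((hG.tilted b x).measurable.smul measurable_id).aestronglyMeasurable
      (Eventually.of_forall fun y => by
        rw [norm_smul, Real.norm_of_nonneg ((hG.tilted b x).pos y).le])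
  rw [tiltedMean, inner_smul_right, mul_inv_cancel_left₀ (hG.laplace_pos b x).ne',
    ← integral_inner smul_int]
  simp only [inner_smul_right]

lemma laplace_mul_exp_le (hG : IsGaussianDominated G) (b : ℝ) (x v : E) :
    laplace b G x * Real.exp (b * inner ℝ v (tiltedMean b G x)) ≤ laplace b G (x + v) := by
  have mean : (∫ y, tilt b G x y * (b * inner ℝ v y)) / laplace b G x
      = b * inner ℝ v (tiltedMean b G x) := by
    simp only [mul_left_comm _ b]
    rw [integral_const_mul, hG.integral_tilt_mul_inner, mul_left_comm,
      mul_div_cancel_left₀ _ (hG.laplace_pos b x).ne']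
  rw [← mean]
  simp only [laplace, tilt_add_left b G x v]
  exact integral_mul_exp_mean_le_integral_mul_exp (fun y => ((hG.tilted b x).pos y).le)
    (hG.tilted b x).integrable
    ((hG.tilted b x).integrable_mul ((HasExpGrowth.const b).mul (.inner_left v)))
    ((hG.tilted b x).integrable_mul (.exp_mul_inner b v)) (hG.laplace_pos b x)

lemma log_laplace_add_inner_le (hG : IsGaussianDominated G) (b : ℝ) (x v : E) :
    Real.log (laplace b G x) + inner ℝ v (b • tiltedMean b G x)
      ≤ Real.log (laplace b G (x + v)) := by
  have := hG.laplace_pos b x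
  rw [inner_smul_right, Real.le_log_iff_exp_le (hG.laplace_pos b _), Real.exp_add,
    Real.exp_log this]
  exact hG.laplace_mul_exp_le b x v

lemma exists_mul_exp_le_laplace (hG : IsGaussianDominated G) (b : ℝ) :
    ∃ c R : ℝ, 0 < c ∧ 0 ≤ R ∧ ∀ x, c * Real.exp (-(R * ‖x‖)) ≤ laplace b G x := by
  have zero_pos := hG.laplace_pos b 0
  set m := tiltedMean b G 0
  refine ⟨laplace b G 0, |b| * ‖m‖, zero_pos, by positivity, fun x => ?_⟩
  calc laplace b G 0 * Real.exp (-(|b| * ‖m‖ * ‖x‖))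
      ≤ laplace b G 0 * Real.exp (b * inner ℝ x m) := by
        gcongr
        rw [neg_le]
        calc -(b * inner ℝ x m) ≤ |b| * |inner ℝ x m| := (neg_le_abs _).trans_eq (abs_mul _ _)
          _ ≤ |b| * (‖x‖ * ‖m‖) := by gcongr; exact abs_real_inner_le_norm _ _
          _ = |b| * ‖m‖ * ‖x‖ := by ring
    _ ≤ laplace b G (0 + x) := hG.laplace_mul_exp_le b 0 x
    _ = laplace b G x := by rw [zero_add]

lemma hasExpGrowth_laplace_inv (hG : IsGaussianDominated G) (b : ℝ) :
    HasExpGrowth fun x => (laplace b G x)⁻¹ := by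
  obtain ⟨c, R, hc, hR, lower⟩ := hG.exists_mul_exp_le_laplace b
  refine ⟨(hG.measurable_laplace b).inv, c⁻¹, R, by positivity, hR, fun x => ?_⟩
  rw [abs_of_pos (inv_pos.2 (hG.laplace_pos b x)), ← neg_neg (R * ‖x‖), Real.exp_neg, ← mul_inv]
  exact inv_anti₀ (by positivity) (lower x)

lemma div_laplace (hw : IsGaussianDominated w) (hG : IsGaussianDominated G) (b : ℝ) :
    IsGaussianDominated fun x => w x / laplace b G x :=
  hw.mul (hG.hasExpGrowth_laplace_inv b) fun x => inv_pos.2 (hG.laplace_pos b x)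

lemma exists_laplace_le (hG : IsGaussianDominated G) (b : ℝ) :
    ∃ C A : ℝ, 0 ≤ A ∧ ∀ x, laplace b G x ≤ C * Real.exp (A * ‖x‖ ^ 2) := by
  obtain ⟨C, a, ha, bound⟩ := hG.bound
  have hC : 0 ≤ C := by simpa using (hG.pos 0).le.trans (bound 0)
  have gauss_int := integrable_exp_neg_mul_sq_norm (E := E) (half_pos ha)
  refine ⟨C * ∫ y : E, Real.exp (-(a / 2) * ‖y‖ ^ 2), b ^ 2 / (2 * a), by positivity,
    fun x => ?_⟩
  rw [mul_assoc, ← integral_mul_const, ← integral_const_mul]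
  refine integral_mono (hG.tilted b x).integrable ((gauss_int.mul_const _).const_mul C) fun y => ?_
  have exponent_le : b * inner ℝ x y ≤ |b| * ‖x‖ * ‖y‖ := by
    rw [mul_assoc]
    calc b * inner ℝ x y ≤ |b| * |inner ℝ x y| := (le_abs_self _).trans_eq (abs_mul _ _)
      _ ≤ |b| * (‖x‖ * ‖y‖) := by gcongr; exact abs_real_inner_le_norm x y
  calc G y * Real.exp (b * inner ℝ x y)
      ≤ C * Real.exp (-a * ‖y‖ ^ 2) * Real.exp (|b| * ‖x‖ * ‖y‖) := by
        gcongr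
        exact bound y
    _ = C * Real.exp (-a * ‖y‖ ^ 2 + |b| * ‖x‖ * ‖y‖) := by rw [Real.exp_add, mul_assoc]
    _ ≤ C * Real.exp ((|b| * ‖x‖) ^ 2 / (2 * a) + -(a / 2) * ‖y‖ ^ 2) := by
        gcongr C * Real.exp ?_
        exact neg_mul_sq_add_mul_le ha _ _
    _ = C * (Real.exp (-(a / 2) * ‖y‖ ^ 2) * Real.exp (b ^ 2 / (2 * a) * ‖x‖ ^ 2)) := by
        rw [add_comm, Real.exp_add, mul_pow, sq_abs, mul_div_right_comm]

lemma hasExpGrowth_log_laplace (hG : IsGaussianDominated G) (b : ℝ) :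
    HasExpGrowth fun x => Real.log (laplace b G x) := by
  obtain ⟨c, R, hc, hR, lower⟩ := hG.exists_mul_exp_le_laplace b
  obtain ⟨C, A, hA, upper⟩ := hG.exists_laplace_le b
  have hC : 0 < C := by simpa using (hG.laplace_pos b 0).trans_le (upper 0)
  refine .of_abs_le (hG.measurable_laplace b).log
    (((HasExpGrowth.const (|Real.log c| + |Real.log C|)).add ((HasExpGrowth.const R).mul .norm)).add
      ((HasExpGrowth.const A).mul (HasExpGrowth.norm.mul .norm))) fun x => ?_
  have log_lower := Real.log_le_log (by positivity) (lower x)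
  have log_upper := Real.log_le_log (hG.laplace_pos b x) (upper x)
  rw [Real.log_mul hc.ne' (Real.exp_ne_zero _), Real.log_exp] at log_lower
  rw [Real.log_mul hC.ne' (Real.exp_ne_zero _), Real.log_exp, sq] at log_upper
  have : 0 ≤ R * ‖x‖ := by positivity
  have : 0 ≤ A * (‖x‖ * ‖x‖) := by positivity
  have := neg_abs_le (Real.log c)
  have := abs_nonneg (Real.log c)
  have := abs_nonneg (Real.log C)
  have := le_abs_self (Real.log C)
  rw [abs_le]
  constructor <;> linarith

lemma lintegral_ofReal_tilt (hG : IsGaussianDominated G) (b : ℝ) (x : E) :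
    ∫⁻ y, ENNReal.ofReal (tilt b G x y) = ENNReal.ofReal (laplace b G x) :=
  (ofReal_integral_eq_lintegral_ofReal (hG.tilted b x).integrable
    (Eventually.of_forall fun y => ((hG.tilted b x).pos y).le)).symm

end IsGaussianDominated

end Laplace

/-! ### Log-concavity and log-convexity of Laplace transforms -/

lemma rpow_mul_rpow_eq_exp {A B : ℝ} (hA : 0 < A) (hB : 0 < B) (s t : ℝ) :
    A ^ s * B ^ t = Real.exp (s * Real.log A + t * Real.log B) := by
  rw [Real.rpow_def_of_pos hA, Real.rpow_def_of_pos hB, ← Real.exp_add, mul_comm s, mul_comm t]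

section Tilt

variable {E : Type*} [NormedAddCommGroup E] [InnerProductSpace ℝ E] {G : E → ℝ} {κ s t : ℝ}

lemma inner_combination (hst : s + t = 1) (u v y z : E) :
    inner ℝ (s • u + t • v) (s • y + t • z)
      = s * inner ℝ u y + t * inner ℝ v z - s * t * inner ℝ (u - v) (y - z) := by
  obtain rfl : t = 1 - s := by linarith
  simp only [inner_add_left, inner_add_right, inner_sub_left, inner_sub_right,
    real_inner_smul_left, real_inner_smul_right]
  ring

lemma log_tilt (G_pos : ∀ y, 0 < G y) (b : ℝ) (x y : E) :
    Real.log (tilt b G x y) = Real.log (G y) + b * inner ℝ x y := by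
  rw [tilt, Real.log_mul (G_pos y).ne' (Real.exp_ne_zero _), Real.log_exp]

lemma tilt_rpow_mul_tilt_rpow_le (hκ : 0 ≤ κ) (G_pos : ∀ y, 0 < G y)
    (hL : StrongConcaveOn Set.univ κ fun y => Real.log (G y)) (c : ℝ) (hs : 0 ≤ s) (ht : 0 ≤ t)
    (hst : s + t = 1) (u v y z : E) :
    tilt (κ * c) G u y ^ s * tilt (κ * c) G v z ^ t ≤
      Real.exp (s * t * (κ * c ^ 2 / 2 * ‖u - v‖ ^ 2)) *
        tilt (κ * c) G (s • u + t • v) (s • y + t • z) := by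
  have tilt_pos (x y : E) : 0 < tilt (κ * c) G x y := mul_pos (G_pos y) (Real.exp_pos _)
  rw [rpow_mul_rpow_eq_exp (tilt_pos _ _) (tilt_pos _ _),
    ← Real.exp_log (tilt_pos (s • u + t • v) _), ← Real.exp_add, Real.exp_le_exp]
  simp only [log_tilt G_pos, inner_combination hst]
  have concave := hL.2 (Set.mem_univ y) (Set.mem_univ z) hs ht hst
  simp only [smul_eq_mul] at concave
  have square : 0 ≤ s * t * (κ / 2 * ‖y - z - c • (u - v)‖ ^ 2) := by positivity
  rw [norm_sub_sq_real, real_inner_smul_right, norm_smul, mul_pow, Real.norm_eq_abs, sq_abs,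
    real_inner_comm] at square
  linarith

lemma exp_mul_tilt_add_smul_le (G_pos : ∀ y, 0 < G y)
    (hL : StrongConvexOn Set.univ (-κ) fun y => Real.log (G y)) (c : ℝ) (hs : 0 ≤ s) (ht : 0 ≤ t)
    (hst : s + t = 1) (u v z : E) :
    Real.exp (s * t * (κ * c ^ 2 / 2 * ‖u - v‖ ^ 2)) *
        tilt (κ * c) G (s • u + t • v) (z + c • (s • u + t • v)) ≤
      tilt (κ * c) G u (z + c • u) ^ s * tilt (κ * c) G v (z + c • v) ^ t := by
  have tilt_pos (x y : E) : 0 < tilt (κ * c) G x y := mul_pos (G_pos y) (Real.exp_pos _)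
  have combination : z + c • (s • u + t • v) = s • (z + c • u) + t • (z + c • v) := by
    obtain rfl : t = 1 - s := by linarith
    module
  rw [combination, rpow_mul_rpow_eq_exp (tilt_pos _ _) (tilt_pos _ _),
    ← Real.exp_log (tilt_pos (s • u + t • v) _), ← Real.exp_add, Real.exp_le_exp]
  simp only [log_tilt G_pos, inner_combination hst]
  have convex := hL.2 (Set.mem_univ (z + c • u)) (Set.mem_univ (z + c • v)) hs ht hst
  have difference : z + c • u - (z + c • v) = c • (u - v) := by module
  rw [difference] at convex ⊢
  simp only [smul_eq_mul, norm_smul, mul_pow, Real.norm_eq_abs, sq_abs] at convex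
  rw [real_inner_smul_right, real_inner_self_eq_norm_sq]
  linarith

end Tilt

lemma two_add_sq_le_exp_add_exp_neg (z : ℝ) : 2 + z ^ 2 ≤ Real.exp z + Real.exp (-z) := by
  have half_le : |z / 2| ≤ |Real.sinh (z / 2)| := by
    rw [Real.abs_sinh]
    exact Real.self_le_sinh_iff.2 (abs_nonneg _)
  have cosh_eq : Real.cosh z = 1 + 2 * Real.sinh (z / 2) ^ 2 := by
    rw [← mul_div_cancel₀ z two_ne_zero, Real.cosh_two_mul, Real.cosh_sq]
    ring_nf
  rw [Real.cosh_eq] at cosh_eq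
  linarith [sq_le_sq.2 half_le]

section LogConcavity

variable {E : Type*} [NormedAddCommGroup E] [InnerProductSpace ℝ E] [FiniteDimensional ℝ E]
  [MeasurableSpace E] [BorelSpace E] {G : E → ℝ} {κ : ℝ}

lemma laplace_rpow_mul_laplace_rpow_le (hG : IsGaussianDominated G) (hκ : 0 ≤ κ)
    (hL : StrongConcaveOn Set.univ κ fun y => Real.log (G y)) (c : ℝ) {s t : ℝ} (hs : 0 < s)
    (ht : 0 < t) (hst : s + t = 1) (u v : E) :
    laplace (κ * c) G u ^ s * laplace (κ * c) G v ^ t ≤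
      Real.exp (s * t * (κ * c ^ 2 / 2 * ‖u - v‖ ^ 2)) * laplace (κ * c) G (s • u + t • v) := by
  set b := κ * c
  set D := Real.exp (s * t * (κ * c ^ 2 / 2 * ‖u - v‖ ^ 2))
  have tilt_measurable (x : E) : Measurable fun y => ENNReal.ofReal (tilt b G x y) :=
    (hG.tilted b x).measurable.ennreal_ofReal
  have prekopa := prekopaLeindler_volume (E := E) hs ht hst (tilt_measurable u) (tilt_measurable v)
    ((tilt_measurable (s • u + t • v)).const_mul (ENNReal.ofReal D)) fun y z => by
      rw [ENNReal.ofReal_rpow_of_pos ((hG.tilted b u).pos y),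
        ENNReal.ofReal_rpow_of_pos ((hG.tilted b v).pos z),
        ← ENNReal.ofReal_mul (Real.rpow_nonneg ((hG.tilted b u).pos y).le s),
        ← ENNReal.ofReal_mul (Real.exp_pos _).le]
      exact ENNReal.ofReal_le_ofReal
        (tilt_rpow_mul_tilt_rpow_le hκ hG.pos hL c hs.le ht.le hst u v y z)
  rw [lintegral_const_mul _ (tilt_measurable _)] at prekopa
  simp only [hG.lintegral_ofReal_tilt] at prekopa
  rwa [ENNReal.ofReal_rpow_of_pos (hG.laplace_pos b u),
    ENNReal.ofReal_rpow_of_pos (hG.laplace_pos b v),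
    ← ENNReal.ofReal_mul (Real.rpow_nonneg (hG.laplace_pos b u).le s),
    ← ENNReal.ofReal_mul (Real.exp_pos _).le,
    ENNReal.ofReal_le_ofReal_iff (mul_pos (Real.exp_pos _) (hG.laplace_pos b _)).le] at prekopa

lemma strongConcaveOn_log_laplace (hG : IsGaussianDominated G) (hκ : 0 ≤ κ)
    (hL : StrongConcaveOn Set.univ κ fun y => Real.log (G y)) (c : ℝ) :
    StrongConcaveOn Set.univ (-(κ * c ^ 2)) fun x => Real.log (laplace (κ * c) G x) := by
  refine ⟨convex_univ, fun u _ v _ s t hs ht hst => ?_⟩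
  rcases hs.eq_or_lt with rfl | hs
  · simp [(zero_add t).symm.trans hst]
  rcases ht.eq_or_lt with rfl | ht
  · simp [(add_zero s).symm.trans hst]
  have laplace_le := laplace_rpow_mul_laplace_rpow_le hG hκ hL c hs ht hst u v
  rw [rpow_mul_rpow_eq_exp (hG.laplace_pos _ u) (hG.laplace_pos _ v),
    ← Real.exp_log (hG.laplace_pos _ (s • u + t • v)), ← Real.exp_add, Real.exp_le_exp]
    at laplace_le
  simp only [smul_eq_mul]
  linarith

lemma exp_mul_laplace_le (hG : IsGaussianDominated G)
    (hL : StrongConvexOn Set.univ (-κ) fun y => Real.log (G y)) (c : ℝ) {s t : ℝ} (hs : 0 ≤ s)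
    (ht : 0 ≤ t) (hst : s + t = 1) (u v : E) :
    Real.exp (s * t * (κ * c ^ 2 / 2 * ‖u - v‖ ^ 2)) * laplace (κ * c) G (s • u + t • v) ≤
      laplace (κ * c) G u ^ s * laplace (κ * c) G v ^ t := by
  set b := κ * c
  set D := Real.exp (s * t * (κ * c ^ 2 / 2 * ‖u - v‖ ^ 2))
  set m := s • u + t • v
  have tilt_measurable (x : E) : Measurable fun z => ENNReal.ofReal (tilt b G x (z + c • x)) :=
    ((hG.tilted b x).measurable.comp (measurable_add_const _)).ennreal_ofReal
  have lintegral_translate (x : E) :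
      ∫⁻ z, ENNReal.ofReal (tilt b G x (z + c • x)) = ENNReal.ofReal (laplace b G x) := by
    rw [lintegral_add_right_eq_self fun y => ENNReal.ofReal (tilt b G x y),
      hG.lintegral_ofReal_tilt]
  have pointwise (z : E) : ENNReal.ofReal D * ENNReal.ofReal (tilt b G m (z + c • m)) ≤
      ENNReal.ofReal (tilt b G u (z + c • u)) ^ s *
        ENNReal.ofReal (tilt b G v (z + c • v)) ^ t := by
    rw [ENNReal.ofReal_rpow_of_pos ((hG.tilted b u).pos _),
      ENNReal.ofReal_rpow_of_pos ((hG.tilted b v).pos _),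
      ← ENNReal.ofReal_mul (Real.rpow_nonneg ((hG.tilted b u).pos _).le s),
      ← ENNReal.ofReal_mul (Real.exp_pos _).le]
    exact ENNReal.ofReal_le_ofReal (exp_mul_tilt_add_smul_le hG.pos hL c hs ht hst u v z)
  have holder := (lintegral_mono (μ := volume) pointwise).trans (ENNReal.lintegral_mul_norm_pow_le
    (tilt_measurable u).aemeasurable (tilt_measurable v).aemeasurable hs ht hst)
  rw [lintegral_const_mul _ (tilt_measurable m)] at holder
  simp only [lintegral_translate] at holder
  have laplace_rpow_nonneg := Real.rpow_nonneg (hG.laplace_pos b u).le s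
  rwa [ENNReal.ofReal_rpow_of_pos (hG.laplace_pos b u),
    ENNReal.ofReal_rpow_of_pos (hG.laplace_pos b v), ← ENNReal.ofReal_mul laplace_rpow_nonneg,
    ← ENNReal.ofReal_mul (Real.exp_pos _).le, ENNReal.ofReal_le_ofReal_iff
      (mul_nonneg laplace_rpow_nonneg (Real.rpow_nonneg (hG.laplace_pos b v).le t))] at holder

lemma strongConvexOn_log_laplace (hG : IsGaussianDominated G)
    (hL : StrongConvexOn Set.univ (-κ) fun y => Real.log (G y)) (c : ℝ) :
    StrongConvexOn Set.univ (κ * c ^ 2) fun x => Real.log (laplace (κ * c) G x) := by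
  refine ⟨convex_univ, fun u _ v _ s t hs ht hst => ?_⟩
  have le_laplace := exp_mul_laplace_le hG hL c hs ht hst u v
  rw [rpow_mul_rpow_eq_exp (hG.laplace_pos _ u) (hG.laplace_pos _ v),
    ← Real.exp_log (hG.laplace_pos _ (s • u + t • v)), ← Real.exp_add, Real.exp_le_exp]
    at le_laplace
  simp only [smul_eq_mul]
  linarith

variable {c : ℝ} (hG : IsGaussianDominated G) (hκ : 0 < κ)
  (hL : StrongConcaveOn Set.univ κ fun y => Real.log (G y))
include hG hκ hL

lemma norm_tiltedMean_sub_le (hc : 0 < c) (x y : E) :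
    ‖tiltedMean (κ * c) G x - tiltedMean (κ * c) G y‖ ≤ c * ‖x - y‖ := by
  have subgradient_lipschitz := lipschitz_subgradient_of_strongConcaveOn_neg (by positivity)
    (strongConcaveOn_log_laplace hG hκ.le hL c) (hG.log_laplace_add_inner_le (κ * c)) x y
  rw [← smul_sub, norm_smul, Real.norm_of_nonneg (by positivity)] at subgradient_lipschitz
  refine le_of_mul_le_mul_left (a := κ * c) ?_ (by positivity)
  linarith

lemma laplace_add_le (x v : E) :
    laplace (κ * c) G (x + v) ≤ laplace (κ * c) G x *
      Real.exp (κ * c * inner ℝ v (tiltedMean (κ * c) G x) + κ * c ^ 2 / 2 * ‖v‖ ^ 2) := by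
  have log_le := le_add_inner_add_sq_of_strongConcaveOn_neg
    (S := fun x => (κ * c) • tiltedMean (κ * c) G x) (strongConcaveOn_log_laplace hG hκ.le hL c)
    (hG.log_laplace_add_inner_le (κ * c) x) v
  rwa [inner_smul_right, Real.log_le_iff_le_exp (hG.laplace_pos _ _), add_assoc, Real.exp_add,
    Real.exp_log (hG.laplace_pos _ _)] at log_le

/-! ### The variance of a tilted weight -/

lemma integral_tilt_mul_exp_inner_sub_le (x v : E) :
    ∫ y, tilt (κ * c) G x y * Real.exp (κ * c * inner ℝ v (y - tiltedMean (κ * c) G x)) ≤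
      laplace (κ * c) G x * Real.exp (κ * c ^ 2 / 2 * ‖v‖ ^ 2) := by
  have upper := laplace_add_le (c := c) hG hκ hL x v
  set b := κ * c
  set T := tiltedMean b G x
  have recenter (y : E) : tilt b G x y * Real.exp (b * inner ℝ v (y - T)) =
      tilt b G (x + v) y * Real.exp (-(b * inner ℝ v T)) := by
    rw [tilt_add_left, mul_assoc (tilt b G x y), ← Real.exp_add, inner_sub_right]
    ring_nf
  simp only [recenter]
  rwa [integral_mul_const, Real.exp_neg, ← div_eq_mul_inv, div_le_iff₀ (Real.exp_pos _), mul_assoc,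
    ← Real.exp_add, add_comm (κ * c ^ 2 / 2 * ‖v‖ ^ 2)]

lemma sq_mul_integral_tilt_mul_inner_sub_sq_le (x v : E) :
    (κ * c) ^ 2 * ∫ y, tilt (κ * c) G x y * inner ℝ v (y - tiltedMean (κ * c) G x) ^ 2 ≤
      2 * (Real.exp (κ * c ^ 2 / 2 * ‖v‖ ^ 2) - 1) * laplace (κ * c) G x := by
  have exp_le (v : E) := integral_tilt_mul_exp_inner_sub_le (c := c) hG hκ hL x v
  set b := κ * c
  set T := tiltedMean b G x
  have tilt_int := (hG.tilted b x).integrable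
  have sq_int : Integrable fun y => tilt b G x y * inner ℝ v (y - T) ^ 2 := by
    simpa only [sq] using (hG.tilted b x).integrable_mul
      ((HasExpGrowth.inner_sub v T).mul (.inner_sub v T))
  have exp_int (v : E) : Integrable fun y => tilt b G x y * Real.exp (b * inner ℝ v (y - T)) :=
    (hG.tilted b x).integrable_mul (.exp_mul_inner_sub b v T)
  have cosh_le : 2 * laplace b G x + b ^ 2 * ∫ y, tilt b G x y * inner ℝ v (y - T) ^ 2 ≤
      (∫ y, tilt b G x y * Real.exp (b * inner ℝ v (y - T))) +
        ∫ y, tilt b G x y * Real.exp (b * inner ℝ (-v) (y - T)) := by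
    rw [laplace, ← integral_const_mul, ← integral_const_mul,
      ← integral_add (tilt_int.const_mul 2) (sq_int.const_mul _),
      ← integral_add (exp_int v) (exp_int (-v))]
    refine integral_mono ((tilt_int.const_mul 2).add (sq_int.const_mul _))
      ((exp_int v).add (exp_int (-v))) fun y => ?_
    have := mul_le_mul_of_nonneg_left (two_add_sq_le_exp_add_exp_neg (b * inner ℝ v (y - T)))
      ((hG.tilted b x).pos y).le
    simp only [inner_neg_left, mul_neg]
    linarith
  have exp_neg_le := exp_le (-v)
  rw [norm_neg] at exp_neg_le
  linarith [exp_le v]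

lemma integral_tilt_mul_inner_sub_sq_le (hc : 0 < c) (x v : E) :
    ∫ y, tilt (κ * c) G x y * inner ℝ v (y - tiltedMean (κ * c) G x) ^ 2 ≤
      ‖v‖ ^ 2 / κ * laplace (κ * c) G x := by
  have scaled (r : ℝ) :=
    sq_mul_integral_tilt_mul_inner_sub_sq_le (c := c) hG hκ hL x (√r • v)
  set L := laplace (κ * c) G x
  set I := ∫ y, tilt (κ * c) G x y * inner ℝ v (y - tiltedMean (κ * c) G x) ^ 2
  set A := κ * c ^ 2 / 2 * ‖v‖ ^ 2
  have slope_le (r : ℝ) (hr : 0 < r) :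
      (κ * c) ^ 2 * I ≤ 2 * L * (r⁻¹ • (Real.exp ((0 + r) * A) - Real.exp (0 * A))) := by
    have := scaled r
    simp only [real_inner_smul_left, mul_pow, norm_smul, Real.norm_eq_abs, sq_abs,
      Real.sq_sqrt hr.le, mul_left_comm _ r] at this
    rw [integral_const_mul] at this
    rw [zero_add, zero_mul, Real.exp_zero, smul_eq_mul, inv_mul_eq_div, mul_div_assoc',
      le_div_iff₀ hr]
    linarith
  have slope_tendsto : Tendsto (fun r : ℝ => r⁻¹ • (Real.exp ((0 + r) * A) - Real.exp (0 * A)))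
      (𝓝[>] 0) (𝓝 A) := by
    simpa using (((hasDerivAt_id (0 : ℝ)).mul_const A).exp).tendsto_slope_zero_right
  have limit := ge_of_tendsto (slope_tendsto.const_mul (2 * L))
    (eventually_mem_nhdsWithin.mono slope_le)
  refine le_of_mul_le_mul_left (a := (κ * c) ^ 2) (limit.trans_eq ?_) (by positivity)
  simp only [A]
  field_simp

lemma integral_tilt_mul_norm_sub_sq_le (hc : 0 < c) (x : E) :
    ∫ y, tilt (κ * c) G x y * ‖y - tiltedMean (κ * c) G x‖ ^ 2 ≤
      Module.finrank ℝ E / κ * laplace (κ * c) G x := by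
  have direction_le (v : E) := integral_tilt_mul_inner_sub_sq_le hG hκ hL hc x v
  set T := tiltedMean (κ * c) G x
  set basis := stdOrthonormalBasis ℝ E
  have sq_int (v : E) : Integrable fun y => tilt (κ * c) G x y * inner ℝ v (y - T) ^ 2 := by
    simpa only [sq] using (hG.tilted (κ * c) x).integrable_mul
      ((HasExpGrowth.inner_sub v T).mul (.inner_sub v T))
  calc ∫ y, tilt (κ * c) G x y * ‖y - T‖ ^ 2
      = ∑ i, ∫ y, tilt (κ * c) G x y * inner ℝ (basis i) (y - T) ^ 2 := by
        rw [← integral_finsetSum _ fun i _ => sq_int (basis i)]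
        simp only [← basis.sum_sq_inner_right, Finset.mul_sum]
    _ ≤ ∑ i, ‖basis i‖ ^ 2 / κ * laplace (κ * c) G x :=
        Finset.sum_le_sum fun i _ => direction_le (basis i)
    _ = Module.finrank ℝ E / κ * laplace (κ * c) G x := by
        simp only [basis.norm_eq_one, one_pow, Finset.sum_const, Finset.card_univ,
          Fintype.card_fin, nsmul_eq_mul]
        ring

end LogConcavity

/-! ### Entropy estimates -/

lemma exists_sub_succ_le {a : ℕ → ℝ} (ha : BddBelow (Set.range a)) {ε : ℝ} (hε : 0 < ε) :
    ∃ k, a k - a (k + 1) ≤ ε := by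
  obtain ⟨k, hk⟩ := exists_lt_of_ciInf_lt (lt_add_of_pos_right (⨅ k, a k) hε)
  exact ⟨k, by linarith [ciInf_le ha (k + 1)]⟩

lemma mul_add_one_le_sq_div_add {η : ℝ} (hη : 0 < η) (s t : ℝ) :
    s * (t + 1) ≤ s ^ 2 / (2 * η) + η * (t ^ 2 + 1) := by
  have square : s ^ 2 / (2 * η) + η * (t ^ 2 + 1) - s * (t + 1) =
      (s - η * (t + 1)) ^ 2 / (2 * η) + η * (t - 1) ^ 2 / 2 := by
    field_simp
    ring
  have : 0 ≤ (s - η * (t + 1)) ^ 2 / (2 * η) + η * (t - 1) ^ 2 / 2 := by positivity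
  linarith

lemma abs_sub_one_le_sub_log {r η : ℝ} (hr : 0 < r) (hη : 0 < η) :
    |r - 1| ≤ (r - 1 - Real.log r) / (2 * η) + η * (r + 1) := by
  obtain ⟨t, ht, rfl⟩ : ∃ t : ℝ, 0 < t ∧ r = t ^ 2 :=
    ⟨√r, Real.sqrt_pos.2 hr, (Real.sq_sqrt hr.le).symm⟩
  have sq_le : (t - 1) ^ 2 ≤ t ^ 2 - 1 - Real.log (t ^ 2) := by
    rw [Real.log_pow]
    push_cast
    linarith [Real.log_le_sub_one_of_pos ht]
  calc |t ^ 2 - 1| = |t - 1| * (t + 1) := by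
        rw [show t ^ 2 - 1 = (t - 1) * (t + 1) by ring, abs_mul, abs_of_pos (a := t + 1)
          (by positivity)]
    _ ≤ |t - 1| ^ 2 / (2 * η) + η * (t ^ 2 + 1) := mul_add_one_le_sq_div_add hη _ _
    _ ≤ (t ^ 2 - 1 - Real.log (t ^ 2)) / (2 * η) + η * (t ^ 2 + 1) := by
        rw [sq_abs]
        gcongr

section Entropy

variable {α : Type*} [MeasurableSpace α] {μ : Measure α} {f g w : α → ℝ}

lemma integral_mul_log_le_integral_mul_log (hw : ∀ x, 0 ≤ w x) (hf : ∀ x, 0 < f x)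
    (hg : ∀ x, 0 < g x) (w_int : Integrable w μ)
    (f_int : Integrable (fun x => w x * Real.log (f x)) μ)
    (g_int : Integrable (fun x => w x * Real.log (g x)) μ)
    (ratio_int : Integrable (fun x => w x * (g x / f x)) μ)
    (ratio_le : ∫ x, w x * (g x / f x) ∂μ ≤ ∫ x, w x ∂μ) :
    ∫ x, w x * Real.log (g x) ∂μ ≤ ∫ x, w x * Real.log (f x) ∂μ := by
  have log_ratio_le : ∫ x, (w x * Real.log (g x) - w x * Real.log (f x)) ∂μ ≤
      ∫ x, (w x * (g x / f x) - w x) ∂μ := by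
    refine integral_mono (g_int.sub f_int) (ratio_int.sub w_int) fun x => ?_
    have := Real.log_le_sub_one_of_pos (div_pos (hg x) (hf x))
    rw [Real.log_div (hg x).ne' (hf x).ne'] at this
    linarith [mul_le_mul_of_nonneg_left this (hw x)]
  rw [integral_sub g_int f_int, integral_sub ratio_int w_int] at log_ratio_le
  linarith

/-- The integrated form of `abs_sub_one_le_sub_log` is a weak Pinsker inequality: optimizing over
`η` bounds the total variation by the square root of the relative entropy. -/
lemma integral_abs_sub_le_entropy (hf : ∀ x, 0 < f x) (hg : ∀ x, 0 < g x) (f_int : Integrable f μ)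
    (g_int : Integrable g μ) (ent_int : Integrable (fun x => g x * Real.log (f x / g x)) μ)
    {η : ℝ} (hη : 0 < η) :
    ∫ x, |f x - g x| ∂μ ≤
      (∫ x, f x ∂μ - ∫ x, g x ∂μ - ∫ x, g x * Real.log (f x / g x) ∂μ) / (2 * η) +
        η * (∫ x, f x ∂μ + ∫ x, g x ∂μ) := by
  have diff_int : Integrable (fun x => f x - g x) μ := f_int.sub g_int
  have gap_int : Integrable (fun x => f x - g x - g x * Real.log (f x / g x)) μ :=
    diff_int.sub ent_int
  have sum_int : Integrable (fun x => f x + g x) μ := f_int.add g_int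
  calc ∫ x, |f x - g x| ∂μ
      ≤ ∫ x, ((f x - g x - g x * Real.log (f x / g x)) / (2 * η) + η * (f x + g x)) ∂μ := by
        refine integral_mono diff_int.abs
          ((gap_int.div_const _).add (sum_int.const_mul _)) fun x => ?_
        have ratio := mul_le_mul_of_nonneg_left
          (abs_sub_one_le_sub_log (div_pos (hf x) (hg x)) hη) (hg x).le
        rw [← abs_of_pos (hg x), ← abs_mul, abs_of_pos (hg x), mul_sub, mul_one,
          mul_div_cancel₀ _ (hg x).ne'] at ratio
        refine ratio.trans_eq ?_
        have := (hg x).ne'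
        field_simp
    _ = (∫ x, f x ∂μ - ∫ x, g x ∂μ - ∫ x, g x * Real.log (f x / g x) ∂μ) / (2 * η) +
          η * (∫ x, f x ∂μ + ∫ x, g x ∂μ) := by
        rw [integral_add (gap_int.div_const _) (sum_int.const_mul _),
          integral_div, integral_const_mul, integral_sub diff_int ent_int,
          integral_sub f_int g_int, integral_add f_int g_int]

end Entropy

/-! ### Pairing two weights through the exponential kernel -/

section Pairing

variable {E : Type*} [NormedAddCommGroup E] [InnerProductSpace ℝ E] [FiniteDimensional ℝ E]
  [MeasurableSpace E] [BorelSpace E] {F G φ : E → ℝ} {b : ℝ}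

variable (hF : IsGaussianDominated F) (hG : IsGaussianDominated G)
  (hFG : Integrable fun x => F x * laplace b G x)
include hF hG hFG

lemma integrable_prod_mul_tilt :
    Integrable (fun z : E × E => F z.1 * tilt b G z.1 z.2) (volume.prod volume) := by
  have measurable : Measurable fun z : E × E => F z.1 * tilt b G z.1 z.2 :=
    (hF.measurable.comp measurable_fst).mul (measurable_uncurry_tilt b hG.measurable)
  rw [integrable_prod_iff measurable.aestronglyMeasurable]
  refine ⟨Eventually.of_forall fun x => (hG.tilted b x).integrable.const_mul (F x),
    hFG.congr (Eventually.of_forall fun x => ?_)⟩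
  simp only [laplace, ← integral_const_mul]
  exact integral_congr_ae (Eventually.of_forall fun y =>
    (Real.norm_of_nonneg (mul_pos (hF.pos x) ((hG.tilted b x).pos y)).le).symm)

lemma integrable_mul_laplace_comm : Integrable fun y => G y * laplace b F y := by
  refine (integrable_prod_mul_tilt hF hG hFG).swap.integral_prod_left.congr
    (Eventually.of_forall fun y => ?_)
  simp only [Function.comp, Prod.swap, mul_tilt_comm b F G, laplace]
  rw [integral_const_mul]

lemma integrable_prod_mul_tilt_mul (hφ : Measurable φ) (φ_le : ∀ y, |φ y| ≤ 1) :
    Integrable (fun z : E × E => F z.1 * (tilt b G z.1 z.2 * φ z.2)) (volume.prod volume) := by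
  simp only [← mul_assoc]
  exact (integrable_prod_mul_tilt hF hG hFG).mul_bdd (c := 1)
    (hφ.comp measurable_snd).aestronglyMeasurable (Eventually.of_forall fun z => φ_le z.2)

lemma integrable_mul_integral_tilt_mul (hφ : Measurable φ) (φ_le : ∀ y, |φ y| ≤ 1) :
    Integrable fun x => F x * ∫ y, tilt b G x y * φ y := by
  simpa only [integral_const_mul] using
    (integrable_prod_mul_tilt_mul hF hG hFG hφ φ_le).integral_prod_left

lemma integral_mul_integral_tilt_mul (hφ : Measurable φ) (φ_le : ∀ y, |φ y| ≤ 1) :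
    ∫ x, F x * ∫ y, tilt b G x y * φ y = ∫ y, G y * laplace b F y * φ y := by
  simp only [← integral_const_mul]
  rw [integral_integral_swap (integrable_prod_mul_tilt_mul hF hG hFG hφ φ_le)]
  simp only [← mul_assoc, mul_tilt_comm b F G, integral_mul_const, integral_const_mul, laplace]

lemma integral_mul_laplace_comm : ∫ x, F x * laplace b G x = ∫ y, G y * laplace b F y := by
  simpa only [laplace, mul_one] using
    integral_mul_integral_tilt_mul hF hG hFG (φ := fun _ => 1) measurable_const (by simp)

end Pairing

/-! ### Sinkhorn iteration -/

section Sinkhorn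

variable {E : Type*} [NormedAddCommGroup E] [InnerProductSpace ℝ E] [FiniteDimensional ℝ E]
  [MeasurableSpace E] [BorelSpace E] {b κ c : ℝ} {F G p q : E → ℝ}

/-- The weight `F` solving `F * laplace b G = p`: half a step of Sinkhorn's algorithm. -/
noncomputable def sinkhornScaling (b : ℝ) (p G : E → ℝ) (x : E) : ℝ := p x / laplace b G x

/-- Sinkhorn's iterates for the marginals `p` and `q`, started at the weight `G₀`; only the scaling
on the side of `q` is recorded. -/
noncomputable def sinkhorn (b : ℝ) (p q G₀ : E → ℝ) (k : ℕ) : E → ℝ :=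
  (fun G => sinkhornScaling b q (sinkhornScaling b p G))^[k] G₀

lemma sinkhorn_succ (b : ℝ) (p q G₀ : E → ℝ) (k : ℕ) :
    sinkhorn b p q G₀ (k + 1) = sinkhornScaling b q (sinkhornScaling b p (sinkhorn b p q G₀ k)) :=
  Function.iterate_succ_apply' _ _ _

lemma sinkhornScaling_mul_laplace (hG : IsGaussianDominated G) (b : ℝ) (p : E → ℝ) (x : E) :
    sinkhornScaling b p G x * laplace b G x = p x :=
  div_mul_cancel₀ _ (hG.laplace_pos b x).ne'

section Scaling

variable (hp : IsGaussianDominated p) (hG : IsGaussianDominated G)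
include hp hG

lemma isGaussianDominated_sinkhornScaling (b : ℝ) : IsGaussianDominated (sinkhornScaling b p G) :=
  hp.div_laplace hG b

lemma log_sinkhornScaling (b : ℝ) (x : E) :
    Real.log (sinkhornScaling b p G x) = Real.log (p x) - Real.log (laplace b G x) :=
  Real.log_div (hp.pos x).ne' (hG.laplace_pos b x).ne'

lemma integrable_sinkhornScaling_mul_laplace (b : ℝ) :
    Integrable fun x => sinkhornScaling b p G x * laplace b G x := by
  simpa only [sinkhornScaling_mul_laplace hG] using hp.integrable

lemma strongConvexOn_log_sinkhornScaling {ρ : ℝ} (hκ : 0 ≤ κ) (hκc : ρ + κ * c ^ 2 = κ)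
    (log_p : StrongConvexOn Set.univ (-ρ) fun x => Real.log (p x))
    (log_G : StrongConcaveOn Set.univ κ fun x => Real.log (G x)) :
    StrongConvexOn Set.univ (-κ) fun x => Real.log (sinkhornScaling (κ * c) p G x) := by
  simp only [log_sinkhornScaling hp hG]
  refine (log_p.sub (strongConcaveOn_log_laplace hG hκ log_G c)).mono fun r => le_of_eq ?_
  simp only [Pi.add_apply]
  linear_combination r ^ 2 / 2 * hκc

lemma strongConcaveOn_log_sinkhornScaling {ρ : ℝ} (hκc : ρ + κ * c ^ 2 = κ)
    (log_p : StrongConcaveOn Set.univ ρ fun x => Real.log (p x))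
    (log_G : StrongConvexOn Set.univ (-κ) fun x => Real.log (G x)) :
    StrongConcaveOn Set.univ κ fun x => Real.log (sinkhornScaling (κ * c) p G x) := by
  simp only [log_sinkhornScaling hp hG]
  refine (log_p.sub (strongConvexOn_log_laplace hG log_G c)).mono fun r => le_of_eq ?_
  simp only [Pi.add_apply]
  linear_combination -r ^ 2 / 2 * hκc

end Scaling

section Iterates

variable {G₀ : E → ℝ} (hp : IsGaussianDominated p) (hq : IsGaussianDominated q)
  (hG₀ : IsGaussianDominated G₀)
include hp hq hG₀

lemma isGaussianDominated_sinkhorn (b : ℝ) (k : ℕ) :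
    IsGaussianDominated (sinkhorn b p q G₀ k) := by
  induction k with
  | zero => exact hG₀
  | succ k ih =>
    rw [sinkhorn_succ]
    exact isGaussianDominated_sinkhornScaling hq (isGaussianDominated_sinkhornScaling hp ih b) b

lemma strongConcaveOn_log_sinkhorn {ρ : ℝ} (hκ : 0 ≤ κ) (hκc : ρ + κ * c ^ 2 = κ)
    (log_p : StrongConvexOn Set.univ (-ρ) fun x => Real.log (p x))
    (log_q : StrongConcaveOn Set.univ ρ fun x => Real.log (q x))
    (log_G₀ : StrongConcaveOn Set.univ κ fun x => Real.log (G₀ x)) (k : ℕ) :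
    StrongConcaveOn Set.univ κ fun x => Real.log (sinkhorn (κ * c) p q G₀ k x) := by
  induction k with
  | zero => exact log_G₀
  | succ k ih =>
    have hG := isGaussianDominated_sinkhorn hp hq hG₀ (κ * c) k
    rw [sinkhorn_succ]
    exact strongConcaveOn_log_sinkhornScaling hq (isGaussianDominated_sinkhornScaling hp hG _) hκc
      log_q (strongConvexOn_log_sinkhornScaling hp hG hκ hκc log_p ih)

end Iterates

lemma integral_mul_log_laplace_sinkhornScaling_le (hp : IsGaussianDominated p)
    (hq : IsGaussianDominated q) (hF : IsGaussianDominated F) (hpq : ∫ x, p x = ∫ x, q x) (b : ℝ) :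
    ∫ y, q y * Real.log (laplace b (sinkhornScaling b p (sinkhornScaling b q F)) y) ≤
      ∫ y, q y * Real.log (laplace b F y) := by
  set G := sinkhornScaling b q F
  have hG : IsGaussianDominated G := isGaussianDominated_sinkhornScaling hq hF b
  set F' := sinkhornScaling b p G
  have hF' : IsGaussianDominated F' := isGaussianDominated_sinkhornScaling hp hG b
  have pairing_int := integrable_sinkhornScaling_mul_laplace hp hG b
  have ratio (y : E) : q y * (laplace b F' y / laplace b F y) = G y * laplace b F' y := by
    rw [mul_div_left_comm, mul_comm]
    rfl
  have ratio_integral : ∫ y, G y * laplace b F' y = ∫ y, q y := by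
    rw [← integral_mul_laplace_comm hF' hG pairing_int, ← hpq]
    simp only [F', sinkhornScaling_mul_laplace hG]
  refine integral_mul_log_le_integral_mul_log (fun y => (hq.pos y).le) (hF.laplace_pos b)
    (hF'.laplace_pos b) hq.integrable (hq.integrable_mul (hF.hasExpGrowth_log_laplace b))
    (hq.integrable_mul (hF'.hasExpGrowth_log_laplace b)) ?_ ?_
  · simpa only [ratio] using integrable_mul_laplace_comm hF' hG pairing_int
  · simpa only [ratio] using ratio_integral.le

lemma integral_mul_inner_sub_log_laplace_le (hq : IsGaussianDominated q)
    (hF : IsGaussianDominated F) (q_one : ∫ y, q y = 1) (b : ℝ) (x : E) :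
    (∫ y, q y * (b * inner ℝ x y)) - ∫ y, q y * Real.log (laplace b F y) ≤
      Real.log (laplace b (sinkhornScaling b q F) x) := by
  have hG : IsGaussianDominated (sinkhornScaling b q F) :=
    isGaussianDominated_sinkhornScaling hq hF b
  have inner_int := hq.integrable_mul ((HasExpGrowth.const b).mul (.inner_left x))
  have log_int := hq.integrable_mul (hF.hasExpGrowth_log_laplace b)
  have exponent (y : E) : q y * Real.exp (b * inner ℝ x y - Real.log (laplace b F y)) =
      tilt b (sinkhornScaling b q F) x y := by
    rw [Real.exp_sub, Real.exp_log (hF.laplace_pos b y), tilt, sinkhornScaling]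
    ring
  have jensen := integral_mul_exp_mean_le_integral_mul_exp
    (h := fun y => b * inner ℝ x y - Real.log (laplace b F y)) (fun y => (hq.pos y).le)
    hq.integrable ((inner_int.sub log_int).congr (Eventually.of_forall fun y => (mul_sub ..).symm))
    ((hG.tilted b x).integrable.congr (Eventually.of_forall fun y => (exponent y).symm))
    (q_one ▸ one_pos)
  simp only [exponent, q_one, div_one, one_mul, mul_sub] at jensen
  rw [integral_sub inner_int log_int] at jensen
  exact (Real.le_log_iff_exp_le (hG.laplace_pos b x)).2 jensen

lemma neg_mul_norm_sub_le_log_laplace (hq : IsGaussianDominated q) (hF : IsGaussianDominated F)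
    (q_one : ∫ y, q y = 1) (b : ℝ) (x : E) :
    -(|b| * ∫ y, q y * ‖y‖) * ‖x‖ - ∫ y, q y * Real.log (laplace b F y) ≤
      Real.log (laplace b (sinkhornScaling b q F) x) := by
  refine le_trans ?_ (integral_mul_inner_sub_log_laplace_le hq hF q_one b x)
  gcongr
  calc -(|b| * ∫ y, q y * ‖y‖) * ‖x‖ = ∫ y, q y * ‖y‖ * -(|b| * ‖x‖) := by
        rw [integral_mul_const]
        ring
    _ ≤ ∫ y, q y * (b * inner ℝ x y) := by
        refine integral_mono ((hq.integrable_mul .norm).mul_const _)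
          (hq.integrable_mul ((HasExpGrowth.const b).mul (.inner_left x))) fun y => ?_
        have : |b * inner ℝ x y| ≤ |b| * (‖x‖ * ‖y‖) := by
          rw [abs_mul]
          gcongr
          exact abs_real_inner_le_norm x y
        nlinarith [(abs_le.1 this).1, hq.pos y]

section Convergence

variable {G₀ : E → ℝ} (hp : IsGaussianDominated p) (hq : IsGaussianDominated q)
  (hG₀ : IsGaussianDominated G₀) (p_one : ∫ x, p x = 1) (q_one : ∫ x, q x = 1)
include hp hq hG₀ p_one q_one

lemma antitone_integral_mul_log_laplace_sinkhorn (b : ℝ) :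
    Antitone fun k =>
      ∫ y, q y * Real.log (laplace b (sinkhornScaling b p (sinkhorn b p q G₀ k)) y) :=
  antitone_nat_of_succ_le fun k => by
    rw [sinkhorn_succ]
    exact integral_mul_log_laplace_sinkhornScaling_le hp hq (isGaussianDominated_sinkhornScaling hp
      (isGaussianDominated_sinkhorn hp hq hG₀ b k) b) (p_one.trans q_one.symm) b

lemma bddBelow_integral_mul_log_laplace_sinkhorn (b : ℝ) :
    BddBelow (Set.range fun k =>
      ∫ x, p x * Real.log (laplace b (sinkhorn b p q G₀ (k + 1)) x)) := by
  have hG (k : ℕ) : IsGaussianDominated (sinkhorn b p q G₀ k) :=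
    isGaussianDominated_sinkhorn hp hq hG₀ b k
  set M := |b| * ∫ y, q y * ‖y‖
  set J : ℕ → ℝ := fun k =>
    ∫ y, q y * Real.log (laplace b (sinkhornScaling b p (sinkhorn b p q G₀ k)) y)
  have growth : HasExpGrowth fun x : E => -M * ‖x‖ + -J 0 :=
    ((HasExpGrowth.const (-M)).mul .norm).add (.const (-J 0))
  refine ⟨∫ x, p x * (-M * ‖x‖ + -J 0), ?_⟩
  rintro _ ⟨k, rfl⟩
  refine integral_mono (hp.integrable_mul growth)
    (hp.integrable_mul ((hG (k + 1)).hasExpGrowth_log_laplace b)) fun x => ?_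
  refine mul_le_mul_of_nonneg_left ?_ (hp.pos x).le
  have jensen := neg_mul_norm_sub_le_log_laplace hq
    (isGaussianDominated_sinkhornScaling hp (hG k) b) q_one b x
  have J_le : J k ≤ J 0 :=
    antitone_integral_mul_log_laplace_sinkhorn hp hq hG₀ p_one q_one b (Nat.zero_le k)
  rw [sinkhorn_succ]
  linarith

lemma exists_integral_mul_log_laplace_sinkhorn_sub_le (b : ℝ) {δ : ℝ} (hδ : 0 < δ) :
    ∃ k, (∫ x, p x * Real.log (laplace b (sinkhorn b p q G₀ k) x)) -
      ∫ x, p x * Real.log (laplace b (sinkhorn b p q G₀ (k + 1)) x) ≤ δ :=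
  let ⟨k, hk⟩ := exists_sub_succ_le
    (bddBelow_integral_mul_log_laplace_sinkhorn hp hq hG₀ p_one q_one b) hδ
  ⟨k + 1, hk⟩

end Convergence

/-! ### The barycentric map almost transports the first marginal to the second -/

lemma le_sq_div_add_half {s : ℝ} (hs : 0 < s) (r : ℝ) : r ≤ r ^ 2 / (2 * s) + s / 2 := by
  have square : r ^ 2 / (2 * s) + s / 2 - r = (r - s) ^ 2 / (2 * s) := by
    field_simp
    ring
  have : 0 ≤ (r - s) ^ 2 / (2 * s) := by positivity
  linarith

section Transport

variable {φ : E → ℝ} {s : ℝ} (hG : IsGaussianDominated G) (hκ : 0 < κ) (hc : 0 < c)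
  (log_G : StrongConcaveOn Set.univ κ fun y => Real.log (G y))
include hG hκ hc log_G

lemma lipschitzWith_tiltedMean : LipschitzWith c.toNNReal (tiltedMean (κ * c) G) :=
  .of_dist_le_mul fun x y => by
    simpa only [dist_eq_norm, Real.coe_toNNReal c hc.le] using
      norm_tiltedMean_sub_le hG hκ log_G hc x y

lemma integral_tilt_mul_norm_sub_le (hs : 0 < s) (dim_le : Module.finrank ℝ E / κ ≤ s ^ 2)
    (x : E) : ∫ y, tilt (κ * c) G x y * ‖y - tiltedMean (κ * c) G x‖ ≤
      s * laplace (κ * c) G x := by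
  have variance := integral_tilt_mul_norm_sub_sq_le hG hκ log_G hc x
  set b := κ * c
  set T := tiltedMean b G x
  have hGx := hG.tilted b x
  have norm_sq_int : Integrable fun y => tilt b G x y * ‖y - T‖ ^ 2 := by
    simpa only [sq] using hGx.integrable_mul ((HasExpGrowth.norm_sub T).mul (.norm_sub T))
  calc ∫ y, tilt b G x y * ‖y - T‖
      ≤ ∫ y, (tilt b G x y * ‖y - T‖ ^ 2 / (2 * s) + tilt b G x y * (s / 2)) := by
        refine integral_mono (hGx.integrable_mul (.norm_sub T))
          ((norm_sq_int.div_const _).add (hGx.integrable.mul_const _)) fun y => ?_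
        simp only [mul_div_assoc, ← mul_add]
        exact mul_le_mul_of_nonneg_left (le_sq_div_add_half hs _) (hGx.pos y).le
    _ = (∫ y, tilt b G x y * ‖y - T‖ ^ 2) / (2 * s) + laplace b G x * (s / 2) := by
        rw [integral_add (norm_sq_int.div_const _) (hGx.integrable.mul_const _), integral_div,
          integral_mul_const, laplace]
    _ ≤ s ^ 2 * laplace b G x / (2 * s) + laplace b G x * (s / 2) := by
        gcongr
        exact variance.trans (mul_le_mul_of_nonneg_right dim_le (hG.laplace_pos b x).le)
    _ = s * laplace b G x := by
        field_simp
        ring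

lemma abs_integral_tilt_mul_sub_le (hs : 0 < s) (dim_le : Module.finrank ℝ E / κ ≤ s ^ 2)
    (φ_le : ∀ y, |φ y| ≤ 1) (φ_lip : LipschitzWith 1 φ) (x : E) :
    |(∫ y, tilt (κ * c) G x y * φ y) - laplace (κ * c) G x * φ (tiltedMean (κ * c) G x)| ≤
      s * laplace (κ * c) G x := by
  have spread := integral_tilt_mul_norm_sub_le hG hκ hc log_G hs dim_le x
  set b := κ * c
  set T := tiltedMean b G x
  have hGx := hG.tilted b x
  have φ_int : Integrable fun y => tilt b G x y * φ y := hGx.integrable.mul_bdd (c := 1)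
    φ_lip.continuous.aestronglyMeasurable (Eventually.of_forall φ_le)
  have diff_int : Integrable fun y => tilt b G x y * (φ y - φ T) := by
    simp only [mul_sub]
    exact φ_int.sub (hGx.integrable.mul_const (φ T))
  rw [laplace, ← integral_mul_const, ← integral_sub φ_int (hGx.integrable.mul_const _)]
  simp only [← mul_sub]
  refine (abs_integral_le_integral_abs.trans (integral_mono diff_int.abs
    (hGx.integrable_mul (.norm_sub T)) fun y => ?_)).trans spread
  simp only [abs_mul, abs_of_pos (hGx.pos y)]
  refine mul_le_mul_of_nonneg_left ?_ (hGx.pos y).le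
  simpa [Real.dist_eq, dist_eq_norm] using φ_lip.dist_le_mul y T

lemma abs_integral_sub_integral_pairing_le (hF : IsGaussianDominated F)
    (hGF : Integrable fun y => G y * laplace (κ * c) F y) (hs : 0 < s)
    (dim_le : Module.finrank ℝ E / κ ≤ s ^ 2)
    (φ_le : ∀ y, |φ y| ≤ 1) (φ_lip : LipschitzWith 1 φ) :
    |(∫ y, G y * laplace (κ * c) F y * φ y) -
        ∫ x, F x * laplace (κ * c) G x * φ (tiltedMean (κ * c) G x)| ≤
      s * ∫ y, G y * laplace (κ * c) F y := by
  have T_cont := (lipschitzWith_tiltedMean hG hκ hc log_G).continuous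
  have inner_le := abs_integral_tilt_mul_sub_le hG hκ hc log_G hs dim_le φ_le φ_lip
  set b := κ * c
  have hFG := integrable_mul_laplace_comm hG hF hGF
  have φ_meas := φ_lip.continuous.measurable
  have mean_int : Integrable fun x => F x * laplace b G x * φ (tiltedMean b G x) :=
    hFG.mul_bdd (c := 1) (φ_lip.continuous.comp T_cont).aestronglyMeasurable
      (Eventually.of_forall fun x => φ_le _)
  have disint_int := integrable_mul_integral_tilt_mul hF hG hFG φ_meas φ_le
  rw [← integral_mul_integral_tilt_mul hF hG hFG φ_meas φ_le, ← integral_sub disint_int mean_int,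
    integral_mul_laplace_comm hG hF hGF, ← integral_const_mul]
  refine abs_integral_le_integral_abs.trans
    (integral_mono (disint_int.sub mean_int).abs (hFG.const_mul s) fun x => ?_)
  simp only [mul_assoc (F x), ← mul_sub, abs_mul, abs_of_pos (hF.pos x), mul_left_comm s]
  exact mul_le_mul_of_nonneg_left (inner_le x) (hF.pos x).le

end Transport

lemma abs_integral_pairing_sub_integral_le {G' ψ : E → ℝ} (hp : IsGaussianDominated p)
    (hG : IsGaussianDominated G) (hG' : IsGaussianDominated G') (p_one : ∫ x, p x = 1)
    (pairing_int : Integrable fun x => sinkhornScaling b p G x * laplace b G' x)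
    (pairing_one : ∫ x, sinkhornScaling b p G x * laplace b G' x = 1) (hψ : Measurable ψ)
    (ψ_le : ∀ x, |ψ x| ≤ 1) {η : ℝ} (hη : 0 < η) :
    |(∫ x, sinkhornScaling b p G x * laplace b G' x * ψ x) - ∫ x, p x * ψ x| ≤
      ((∫ x, p x * Real.log (laplace b G x)) - ∫ x, p x * Real.log (laplace b G' x)) / (2 * η) +
        2 * η := by
  set f := fun x => sinkhornScaling b p G x * laplace b G' x
  have f_pos (x : E) : 0 < f x :=
    mul_pos ((isGaussianDominated_sinkhornScaling hp hG b).pos x) (hG'.laplace_pos b x)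
  have mul_int {g : E → ℝ} (hg : Integrable g) : Integrable fun x => g x * ψ x :=
    hg.mul_bdd (c := 1) hψ.aestronglyMeasurable (Eventually.of_forall ψ_le)
  have log_ratio (x : E) : p x * Real.log (f x / p x) =
      p x * Real.log (laplace b G' x) - p x * Real.log (laplace b G x) := by
    rw [Real.log_div (f_pos x).ne' (hp.pos x).ne', Real.log_mul
      ((isGaussianDominated_sinkhornScaling hp hG b).pos x).ne' (hG'.laplace_pos b x).ne',
      log_sinkhornScaling hp hG]
    ring
  have log_int := hp.integrable_mul (hG.hasExpGrowth_log_laplace b)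
  have log_int' := hp.integrable_mul (hG'.hasExpGrowth_log_laplace b)
  have pinsker := integral_abs_sub_le_entropy f_pos hp.pos pairing_int hp.integrable
    ((log_int'.sub log_int).congr (Eventually.of_forall fun x => (log_ratio x).symm)) hη
  simp only [log_ratio] at pinsker
  rw [integral_sub log_int' log_int, pairing_one, p_one] at pinsker
  calc |(∫ x, f x * ψ x) - ∫ x, p x * ψ x| = |∫ x, (f x * ψ x - p x * ψ x)| := by
        rw [integral_sub (mul_int pairing_int) (mul_int hp.integrable)]
    _ ≤ ∫ x, |f x - p x| := by
        refine abs_integral_le_integral_abs.trans (integral_mono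
          ((mul_int pairing_int).sub (mul_int hp.integrable)).abs
          (pairing_int.sub hp.integrable).abs fun x => ?_)
        simp only [← sub_mul, abs_mul]
        exact mul_le_of_le_one_right (abs_nonneg _) (ψ_le x)
    _ ≤ _ := pinsker.trans_eq (by ring)

lemma abs_integral_sub_integral_comp_tiltedMean_le {φ : E → ℝ} {s η : ℝ} (hκ : 0 < κ) (hc : 0 < c)
    (hp : IsGaussianDominated p) (hq : IsGaussianDominated q) (p_one : ∫ x, p x = 1)
    (q_one : ∫ x, q x = 1) (hG : IsGaussianDominated G) {G' : E → ℝ}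
    (G'_eq : G' = sinkhornScaling (κ * c) q (sinkhornScaling (κ * c) p G))
    (log_G' : StrongConcaveOn Set.univ κ fun y => Real.log (G' y)) (hs : 0 < s)
    (dim_le : Module.finrank ℝ E / κ ≤ s ^ 2) (hη : 0 < η) (φ_le : ∀ x, |φ x| ≤ 1)
    (φ_lip : LipschitzWith 1 φ) :
    |(∫ x, q x * φ x) - ∫ x, p x * φ (tiltedMean (κ * c) G' x)| ≤
      s + (((∫ x, p x * Real.log (laplace (κ * c) G x)) -
        ∫ x, p x * Real.log (laplace (κ * c) G' x)) / (2 * η) + 2 * η) := by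
  have hF := isGaussianDominated_sinkhornScaling hp hG (κ * c)
  set F := sinkhornScaling (κ * c) p G
  have hG' : IsGaussianDominated G' := G'_eq ▸ isGaussianDominated_sinkhornScaling hq hF (κ * c)
  have marginal (y : E) : G' y * laplace (κ * c) F y = q y :=
    G'_eq ▸ sinkhornScaling_mul_laplace hF (κ * c) q y
  have hGF : Integrable fun y => G' y * laplace (κ * c) F y := by
    simpa only [marginal] using hq.integrable
  have pairing_one : ∫ x, F x * laplace (κ * c) G' x = 1 := by
    rw [← integral_mul_laplace_comm hG' hF hGF]
    simpa only [marginal] using q_one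
  have T_cont := (lipschitzWith_tiltedMean hG' hκ hc log_G').continuous
  have near_q := abs_integral_sub_integral_pairing_le hG' hκ hc log_G' hF hGF hs dim_le φ_le φ_lip
  simp only [marginal, q_one, mul_one] at near_q
  have near_p := abs_integral_pairing_sub_integral_le hp hG hG' p_one
    (integrable_mul_laplace_comm hG' hF hGF) pairing_one
    (φ_lip.continuous.comp T_cont).measurable (fun x => φ_le _) hη
  exact (abs_sub_le _ _ _).trans (add_le_add near_q near_p)

lemma exists_contraction_scale {ρ : ℝ} (hρ : 0 < ρ) (d : ℝ) {s : ℝ} (hs : 0 < s) :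
    ∃ κ c : ℝ, 0 < κ ∧ 0 < c ∧ c ≤ 1 ∧ ρ + κ * c ^ 2 = κ ∧ d / κ ≤ s ^ 2 := by
  obtain ⟨κ, hρκ, hdκ⟩ := ((eventually_gt_atTop ρ).and (eventually_ge_atTop (d / s ^ 2))).exists
  have hκ := hρ.trans hρκ
  have ratio_lt : ρ / κ < 1 := (div_lt_one hκ).2 hρκ
  refine ⟨κ, √(1 - ρ / κ), hκ, Real.sqrt_pos.2 (by linarith),
    Real.sqrt_le_one.2 (by linarith [div_pos hρ hκ]), ?_, ?_⟩
  · rw [Real.sq_sqrt (by linarith)]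
    field_simp
    ring
  · rwa [div_le_iff₀ (by positivity), ← div_le_iff₀' (by positivity)]

theorem exists_lipschitzWith_one_abs_integral_sub_le {ρ : ℝ} (hρ : 0 < ρ)
    (hp : IsGaussianDominated p) (hq : IsGaussianDominated q) (p_one : ∫ x, p x = 1)
    (q_one : ∫ x, q x = 1) (log_p : StrongConvexOn Set.univ (-ρ) fun x => Real.log (p x))
    (log_q : StrongConcaveOn Set.univ ρ fun x => Real.log (q x)) {ε : ℝ} (hε : 0 < ε) :
    ∃ T : E → E, LipschitzWith 1 T ∧ ∀ φ : E → ℝ, (∀ x, |φ x| ≤ 1) → LipschitzWith 1 φ →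
      |(∫ x, q x * φ x) - ∫ x, p x * φ (T x)| ≤ ε := by
  obtain ⟨κ, c, hκ, hc, c_le, hκc, dim_le⟩ :=
    exists_contraction_scale hρ (Module.finrank ℝ E) (half_pos hε)
  set G₀ : E → ℝ := fun y => Real.exp (-(κ / 2) * ‖y‖ ^ 2)
  have hG₀ : IsGaussianDominated G₀ := .exp_neg_mul_sq_norm (half_pos hκ)
  have log_G₀ : StrongConcaveOn Set.univ κ fun y => Real.log (G₀ y) := by
    simp [G₀, strongConcaveOn_iff_convex, concaveOn_const, convex_univ]
  obtain ⟨k, entropy_le⟩ := exists_integral_mul_log_laplace_sinkhorn_sub_le hp hq hG₀ p_one q_one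
    (κ * c) (show 0 < ε ^ 2 / 16 by positivity)
  have hG := isGaussianDominated_sinkhorn hp hq hG₀ (κ * c)
  have log_G := strongConcaveOn_log_sinkhorn hp hq hG₀ hκ.le hκc log_p log_q log_G₀
  refine ⟨tiltedMean (κ * c) (sinkhorn (κ * c) p q G₀ (k + 1)),
    (lipschitzWith_tiltedMean (hG _) hκ hc (log_G _)).weaken (Real.toNNReal_le_one.2 c_le),
    fun φ φ_le φ_lip => ?_⟩
  refine (abs_integral_sub_integral_comp_tiltedMean_le (η := ε / 8) hκ hc hp hq p_one q_one (hG k)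
    (sinkhorn_succ _ _ _ _ k) (log_G _) (half_pos hε) dim_le (by positivity) φ_le φ_lip).trans ?_
  calc ε / 2 + (_ / (2 * (ε / 8)) + 2 * (ε / 8))
      ≤ ε / 2 + (ε ^ 2 / 16 / (2 * (ε / 8)) + 2 * (ε / 8)) := by gcongr
    _ = ε := by
        field_simp
        norm_num

end Sinkhorn

/-! ### Limits of approximate transport maps -/

section LimitMap

variable {X Y : Type*}

lemma isCompact_setOf_lipschitzWith_dist_le [PseudoMetricSpace X] [PseudoMetricSpace Y]
    [ProperSpace Y] (K : NNReal) (x₀ : X) (y₀ : Y) (r : ℝ) :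
    IsCompact {f : X → Y | LipschitzWith K f ∧ dist (f x₀) y₀ ≤ r} := by
  refine (isCompact_univ_pi fun x => isCompact_closedBall y₀ (K * dist x x₀ + r)).of_isClosed_subset
    ((isClosed_setOfPred_lipschitzWith K).inter
      (isClosed_le ((continuous_apply x₀).dist continuous_const) continuous_const)) ?_
  rintro f ⟨hf, hr⟩ x -
  exact (dist_triangle _ (f x₀) _).trans (add_le_add (hf.dist_le_mul x x₀) hr)

lemma exists_lipschitzWith_subseq_tendsto [PseudoMetricSpace X] [ProperSpace X]
    [PseudoMetricSpace Y] [ProperSpace Y] {K : NNReal} {T : ℕ → X → Y}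
    (hT : ∀ m, LipschitzWith K (T m)) {x₀ : X} {y₀ : Y} {r : ℝ} (hr : ∀ m, dist (T m x₀) y₀ ≤ r) :
    ∃ S : X → Y, LipschitzWith K S ∧
      ∃ σ : ℕ → ℕ, StrictMono σ ∧ ∀ x, Tendsto (fun m => T (σ m) x) atTop (𝓝 (S x)) := by
  have compact : IsCompact {f : C(X, Y) | LipschitzWith K f ∧ dist (f x₀) y₀ ≤ r} := by
    refine ArzelaAscoli.isCompact_of_equicontinuous _ ?_
      (LipschitzWith.uniformEquicontinuous _ K fun f => f.2.1).equicontinuous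
    convert isCompact_setOf_lipschitzWith_dist_le K x₀ y₀ r
    ext f
    exact ⟨fun ⟨_, hg, hgf⟩ => hgf ▸ hg, fun hf => ⟨⟨f, hf.1.continuous⟩, hf, rfl⟩⟩
  obtain ⟨S, hS, σ, hσ, tendsto_S⟩ :=
    compact.tendsto_subseq (x := fun m => ⟨T m, (hT m).continuous⟩) fun m => ⟨hT m, hr m⟩
  exact ⟨S, hS.1, σ, hσ, fun x =>
    ((continuous_eval_const x).tendsto S).comp tendsto_S⟩

lemma exists_const_mul_abs_le_one_lipschitzWith_one [PseudoMetricSpace X] {f : X → ℝ} {C : ℝ}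
    (hC : ∀ x y, dist (f x) (f y) ≤ C) {L : NNReal} (hL : LipschitzWith L f) (x₀ : X) :
    ∃ c : ℝ, 0 < c ∧ (∀ x, |c * f x| ≤ 1) ∧ LipschitzWith 1 fun x => c * f x := by
  set M : ℝ := 1 + |f x₀| + C + L
  have hC₀ : 0 ≤ C := dist_nonneg.trans (hC x₀ x₀)
  have hM : 0 < M := by positivity
  refine ⟨M⁻¹, inv_pos.2 hM, fun x => ?_, .of_dist_le_mul fun x y => ?_⟩
  · have near := hC x x₀
    rw [Real.dist_eq] at near
    rw [abs_mul, abs_of_pos (inv_pos.2 hM), inv_mul_le_one₀ hM]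
    linarith [abs_sub_abs_le_abs_sub (f x) (f x₀), L.coe_nonneg]
  · rw [Real.dist_eq, ← mul_sub, abs_mul, abs_of_pos (inv_pos.2 hM), inv_mul_le_iff₀ hM,
      NNReal.coe_one, one_mul, ← Real.dist_eq]
    refine (hL.dist_le_mul x y).trans ?_
    gcongr
    linarith [abs_nonneg (f x₀)]

lemma eventually_lt_measureReal_closedBall [PseudoMetricSpace X] [MeasurableSpace X]
    (μ : Measure X) [IsProbabilityMeasure μ] (x₀ : X) {c : ℝ} (hc : c < 1) :
    ∀ᶠ R : ℕ in atTop, c < μ.real (Metric.closedBall x₀ R) := by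
  have tendsto_one := tendsto_measure_iUnion_atTop (μ := μ)
    (s := fun R : ℕ => Metric.closedBall x₀ (R : ℝ))
    fun a b hab => Metric.closedBall_subset_closedBall (by exact_mod_cast hab)
  rw [Metric.iUnion_closedBall_nat, measure_univ] at tendsto_one
  exact ((tendsto_toReal one_ne_top).comp tendsto_one).eventually_const_lt (by simpa using hc)

lemma measureReal_le_integral_of_one_le [MeasurableSpace X] {μ : Measure X} [IsFiniteMeasure μ]
    {f : X → ℝ} (hf : Integrable f μ) (f_nonneg : ∀ x, 0 ≤ f x) {s : Set X}
    (one_le : ∀ x ∈ s, 1 ≤ f x) : μ.real s ≤ ∫ x, f x ∂μ := by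
  have markov := mul_meas_ge_le_integral_of_nonneg (Eventually.of_forall f_nonneg) hf 1
  rw [one_mul] at markov
  exact (measureReal_mono one_le).trans markov

variable [PseudoMetricSpace X] [MeasurableSpace X] [BorelSpace X]
  [PseudoMetricSpace Y] [MeasurableSpace Y] [BorelSpace Y]

lemma dist_le_of_forall_abs_integral_sub_le {γ : Measure X} [IsProbabilityMeasure γ] {μ : Measure Y}
    [IsProbabilityMeasure μ] {T : X → Y} (hT : LipschitzWith 1 T) {x₀ : X} {y₀ : Y} {R ε : ℝ}
    (hγ : 3 / 4 < γ.real (Metric.closedBall x₀ R)) (hμ : 3 / 4 < μ.real (Metric.closedBall y₀ R))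
    (hε : ε ≤ 1 / 2)
    (close : ∀ φ : Y → ℝ, (∀ y, |φ y| ≤ 1) → LipschitzWith 1 φ →
      |(∫ y, φ y ∂μ) - ∫ x, φ (T x) ∂γ| ≤ ε) :
    dist (T x₀) y₀ ≤ 2 * R + 1 := by
  by_contra! far
  let φ : Y → ℝ := fun y => max 0 (min 1 (dist y y₀ - R))
  have φ_nonneg (y : Y) : 0 ≤ φ y := le_max_left _ _
  have φ_le_one (y : Y) : φ y ≤ 1 := max_le zero_le_one (min_le_left _ _)
  have φ_abs (y : Y) : |φ y| ≤ 1 := abs_le.2 ⟨by linarith [φ_nonneg y], φ_le_one y⟩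
  have φ_lip : LipschitzWith 1 φ := by
    have dist_lip : LipschitzWith 1 fun y => dist y y₀ - R := by
      simpa using (LipschitzWith.dist_left y₀).sub (LipschitzWith.const R)
    exact (dist_lip.const_min 1).const_max 0
  have integrable_φ : Integrable φ μ :=
    .of_bound φ_lip.continuous.aestronglyMeasurable 1 (Eventually.of_forall φ_abs)
  have integrable_φT : Integrable (fun x => φ (T x)) γ :=
    .of_bound (φ_lip.continuous.comp hT.continuous).aestronglyMeasurable 1
      (Eventually.of_forall fun x => φ_abs (T x))
  have mass_μ : μ.real (Metric.closedBall y₀ R) ≤ ∫ y, (1 - φ y) ∂μ := by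
    refine measureReal_le_integral_of_one_le (f := fun y => 1 - φ y)
      ((integrable_const 1).sub integrable_φ) (fun y => sub_nonneg.2 (φ_le_one y)) fun y hy => ?_
    have : φ y = 0 := max_eq_left ((min_le_right _ _).trans (sub_nonpos.2 hy))
    rw [this, sub_zero]
  have mass_γ : γ.real (Metric.closedBall x₀ R) ≤ ∫ x, φ (T x) ∂γ := by
    refine measureReal_le_integral_of_one_le integrable_φT (fun x => φ_nonneg (T x)) fun x hx => ?_
    have moved := hT.dist_le_mul x₀ x
    rw [NNReal.coe_one, one_mul, dist_comm x₀] at moved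
    have := dist_triangle (T x₀) (T x) y₀
    have := Metric.mem_closedBall.1 hx
    exact le_max_of_le_right (le_min le_rfl (by linarith))
  rw [integral_sub (integrable_const 1) integrable_φ, integral_const, probReal_univ,
    one_smul] at mass_μ
  linarith [(abs_le.1 (close φ φ_abs φ_lip)).1]

lemma ext_of_forall_lipschitzWith_one_integral_eq {μ ν : Measure X} [IsProbabilityMeasure μ]
    [IsProbabilityMeasure ν]
    (h : ∀ φ : X → ℝ, (∀ x, |φ x| ≤ 1) → LipschitzWith 1 φ → ∫ x, φ x ∂μ = ∫ x, φ x ∂ν) :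
    μ = ν := by
  let P : ProbabilityMeasure X := ⟨μ, inferInstance⟩
  let Q : ProbabilityMeasure X := ⟨ν, inferInstance⟩
  have tendsto_Q : Tendsto (fun _ : ℕ => P) atTop (𝓝 Q) := by
    rw [tendsto_iff_forall_lipschitz_integral_tendsto]
    rintro f ⟨C, hC⟩ ⟨L, hL⟩
    obtain ⟨x₀⟩ := nonempty_of_isProbabilityMeasure μ
    obtain ⟨c, hc, abs_le, lip⟩ := exists_const_mul_abs_le_one_lipschitzWith_one hC hL x₀
    have integral_eq := h _ abs_le lip
    rw [integral_const_mul, integral_const_mul] at integral_eq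
    exact tendsto_const_nhds.congr' (Eventually.of_forall fun _ =>
      (mul_left_cancel₀ hc.ne' integral_eq).symm)
  have P_eq_Q : P = Q := tendsto_nhds_unique tendsto_const_nhds tendsto_Q
  exact congrArg Subtype.val P_eq_Q

lemma exists_lipschitzWith_one_map_eq_of_forall_approx [ProperSpace X] [ProperSpace Y]
    (γ : Measure X) (μ : Measure Y) [IsProbabilityMeasure γ] [IsProbabilityMeasure μ]
    (approx : ∀ ε : ℝ, 0 < ε → ∃ T : X → Y, LipschitzWith 1 T ∧ ∀ φ : Y → ℝ,
      (∀ y, |φ y| ≤ 1) → LipschitzWith 1 φ → |(∫ y, φ y ∂μ) - ∫ x, φ (T x) ∂γ| ≤ ε) :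
    ∃ T : X → Y, LipschitzWith 1 T ∧ γ.map T = μ := by
  obtain ⟨ε, -, ε_mem, ε_tendsto⟩ := exists_seq_strictAnti_tendsto' (one_half_pos (α := ℝ))
  choose T hT close using fun m => approx (ε m) (ε_mem m).1
  obtain ⟨x₀⟩ := nonempty_of_isProbabilityMeasure γ
  obtain ⟨y₀⟩ := nonempty_of_isProbabilityMeasure μ
  obtain ⟨R, hγ, hμ⟩ :=
    ((eventually_lt_measureReal_closedBall γ x₀ (by norm_num : (3 / 4 : ℝ) < 1)).and
      (eventually_lt_measureReal_closedBall μ y₀ (by norm_num : (3 / 4 : ℝ) < 1))).exists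
  obtain ⟨S, hS, σ, hσ, tendsto_S⟩ := exists_lipschitzWith_subseq_tendsto hT fun m =>
    dist_le_of_forall_abs_integral_sub_le (hT m) hγ hμ (ε_mem m).2.le (close m)
  have S_meas : AEMeasurable S γ := hS.continuous.measurable.aemeasurable
  have := Measure.isProbabilityMeasure_map S_meas
  refine ⟨S, hS, ext_of_forall_lipschitzWith_one_integral_eq fun φ φ_abs φ_lip => ?_⟩
  rw [integral_map S_meas φ_lip.continuous.aestronglyMeasurable]
  have tendsto_integral_S :
      Tendsto (fun m => ∫ x, φ (T (σ m) x) ∂γ) atTop (𝓝 (∫ x, φ (S x) ∂γ)) :=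
    tendsto_integral_of_dominated_convergence (fun _ => 1)
      (fun m => (φ_lip.continuous.comp (hT (σ m)).continuous).aestronglyMeasurable)
      (integrable_const 1) (fun m => Eventually.of_forall fun x => φ_abs _)
      (Eventually.of_forall fun x => (φ_lip.continuous.tendsto _).comp (tendsto_S x))
  have tendsto_integral_μ :
      Tendsto (fun m => ∫ x, φ (T (σ m) x) ∂γ) atTop (𝓝 (∫ y, φ y ∂μ)) := by
    refine tendsto_iff_dist_tendsto_zero.2 (squeeze_zero (fun _ => dist_nonneg) (fun m => ?_)
      (ε_tendsto.comp hσ.tendsto_atTop))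
    rw [dist_comm, Real.dist_eq]
    exact close (σ m) φ φ_abs φ_lip
  exact tendsto_nhds_unique tendsto_integral_S tendsto_integral_μ

end LimitMap

/-! ### Caffarelli's contraction theorem -/

section Caffarelli

/-- The measure with density proportional to `h` with respect to `μ`, normalized to mass one. -/
noncomputable def normalizedWithDensity {α : Type*} [MeasurableSpace α] (μ : Measure α)
    (h : α → ℝ) : Measure α :=
  ((μ.withDensity fun x => ENNReal.ofReal (h x)) Set.univ)⁻¹ •
    μ.withDensity fun x => ENNReal.ofReal (h x)

section Normalization

variable {α : Type*} [MeasurableSpace α] {μ : Measure α} {h : α → ℝ}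

lemma absolutelyContinuous_withDensity_ofReal (hh : AEMeasurable h μ) (h_pos : ∀ x, 0 < h x) :
    μ ≪ μ.withDensity fun x => ENNReal.ofReal (h x) :=
  withDensity_absolutelyContinuous' hh.ennreal_ofReal
    (Eventually.of_forall fun x => (ENNReal.ofReal_pos.2 (h_pos x)).ne')

lemma neZero_withDensity_ofReal [NeZero μ] (hh : AEMeasurable h μ) (h_pos : ∀ x, 0 < h x) :
    NeZero (μ.withDensity fun x => ENNReal.ofReal (h x)) := by
  refine ⟨fun h_zero => NeZero.ne μ ?_⟩
  have abs_cont := absolutelyContinuous_withDensity_ofReal hh h_pos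
  rwa [h_zero, Measure.absolutelyContinuous_zero_iff] at abs_cont

lemma isProbabilityMeasure_normalizedWithDensity [NeZero μ] (h_int : Integrable h μ)
    (h_pos : ∀ x, 0 < h x) : IsProbabilityMeasure (normalizedWithDensity μ h) := by
  have : IsFiniteMeasure (μ.withDensity fun x => ENNReal.ofReal (h x)) :=
    isFiniteMeasure_withDensity_ofReal h_int.2
  have := neZero_withDensity_ofReal h_int.aemeasurable h_pos
  exact isProbabilityMeasureSMul

lemma integral_normalizedWithDensity (h_int : Integrable h μ) (h_nonneg : ∀ x, 0 ≤ h x)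
    (φ : α → ℝ) :
    ∫ x, φ x ∂normalizedWithDensity μ h = ∫ x, ((∫ y, h y ∂μ)⁻¹ * h x) * φ x ∂μ := by
  have mass : (μ.withDensity fun x => ENNReal.ofReal (h x)) Set.univ =
      ENNReal.ofReal (∫ x, h x ∂μ) := by
    rw [withDensity_apply _ MeasurableSet.univ, setLIntegral_univ,
      ofReal_integral_eq_lintegral_ofReal h_int (Eventually.of_forall h_nonneg)]
  rw [normalizedWithDensity, integral_smul_measure, mass,
    integral_withDensity_eq_integral_toReal_smul₀ h_int.aemeasurable.ennreal_ofReal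
      (Eventually.of_forall fun x => ENNReal.ofReal_lt_top), toReal_inv,
    toReal_ofReal (integral_nonneg h_nonneg), smul_eq_mul, ← integral_const_mul]
  simp only [toReal_ofReal (h_nonneg _), smul_eq_mul, mul_assoc]

end Normalization

variable {E : Type*} [NormedAddCommGroup E] [InnerProductSpace ℝ E]

lemma strongConvexOn_log_const_mul {s : Set E} {m c : ℝ} {p : E → ℝ} (hc : 0 < c)
    (p_pos : ∀ x, 0 < p x) (log_p : StrongConvexOn s m fun x => Real.log (p x)) :
    StrongConvexOn s m fun x => Real.log (c * p x) := by
  simp only [Real.log_mul hc.ne' (p_pos _).ne']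
  have := UniformConvexOn.add (uniformConvexOn_zero.2 (convexOn_const (Real.log c) log_p.1)) log_p
  rwa [zero_add] at this

lemma strongConcaveOn_log_const_mul {s : Set E} {m c : ℝ} {p : E → ℝ} (hc : 0 < c)
    (p_pos : ∀ x, 0 < p x) (log_p : StrongConcaveOn s m fun x => Real.log (p x)) :
    StrongConcaveOn s m fun x => Real.log (c * p x) := by
  simp only [Real.log_mul hc.ne' (p_pos _).ne']
  have := UniformConcaveOn.add (uniformConcaveOn_zero.2 (concaveOn_const (Real.log c) log_p.1))
    log_p
  rwa [zero_add] at this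

lemma strongConvexOn_log_exp_neg_mul_sq_norm (ρ : ℝ) :
    StrongConvexOn Set.univ (-ρ) fun x : E => Real.log (Real.exp (-ρ * ‖x‖ ^ 2 / 2)) := by
  rw [strongConvexOn_iff_convex]
  refine (convexOn_const 0 convex_univ).congr fun x _ => ?_
  rw [Real.log_exp]
  ring

variable [FiniteDimensional ℝ E] [MeasurableSpace E] [BorelSpace E] {ρ : ℝ}

lemma hasExpGrowth_exp_neg_of_convexOn {g : E → ℝ} (hg : ConvexOn ℝ Set.univ g) :
    HasExpGrowth fun x => Real.exp (-g x) := by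
  have g_cont : Continuous g := continuousOn_univ.1 (hg.continuousOn isOpen_univ)
  obtain ⟨l, c, affine_le, -⟩ := hg.exists_affine_le_of_lt (𝕜 := ℝ) (Set.mem_univ 0)
    (sub_one_lt (g 0)) isClosed_univ (g_cont.lowerSemicontinuous.lowerSemicontinuousOn _)
  refine ⟨by fun_prop, Real.exp (-c), ‖l‖, by positivity, norm_nonneg l, fun y => ?_⟩
  rw [Real.abs_exp, ← Real.exp_add, Real.exp_le_exp]
  have le_g : l y + c ≤ g y := affine_le ⟨y, Set.mem_univ y⟩
  linarith [neg_le_of_abs_le (l.le_opNorm y)]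

lemma isGaussianDominated_exp_neg_of_strongConvexOn (hρ : 0 < ρ) {V : E → ℝ}
    (hV : StrongConvexOn Set.univ ρ V) : IsGaussianDominated fun x => Real.exp (-V x) := by
  convert (IsGaussianDominated.exp_neg_mul_sq_norm (half_pos hρ)).mul
    (hasExpGrowth_exp_neg_of_convexOn (strongConvexOn_iff_convex.1 hV))
    (fun _ => Real.exp_pos _) using 2 with x
  rw [← Real.exp_add]
  ring_nf

theorem exists_lipschitzWith_one_map_normalizedWithDensity_eq {p q : E → ℝ} (hρ : 0 < ρ)
    (hp : IsGaussianDominated p) (hq : IsGaussianDominated q)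
    (log_p : StrongConvexOn Set.univ (-ρ) fun x => Real.log (p x))
    (log_q : StrongConcaveOn Set.univ ρ fun x => Real.log (q x)) :
    ∃ T : E → E, LipschitzWith 1 T ∧
      (normalizedWithDensity volume p).map T = normalizedWithDensity volume q := by
  have integral_p := integral_pos_of_forall_pos hp.integrable hp.pos
  have integral_q := integral_pos_of_forall_pos hq.integrable hq.pos
  have := isProbabilityMeasure_normalizedWithDensity hp.integrable hp.pos
  have := isProbabilityMeasure_normalizedWithDensity hq.integrable hq.pos
  refine exists_lipschitzWith_one_map_eq_of_forall_approx _ _ fun ε hε => ?_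
  obtain ⟨T, hT, close⟩ := exists_lipschitzWith_one_abs_integral_sub_le hρ
    (hp.const_mul (inv_pos.2 integral_p)) (hq.const_mul (inv_pos.2 integral_q))
    (by rw [integral_const_mul, inv_mul_cancel₀ integral_p.ne'])
    (by rw [integral_const_mul, inv_mul_cancel₀ integral_q.ne'])
    (strongConvexOn_log_const_mul (inv_pos.2 integral_p) hp.pos log_p)
    (strongConcaveOn_log_const_mul (inv_pos.2 integral_q) hq.pos log_q) hε
  refine ⟨T, hT, fun φ φ_abs φ_lip => ?_⟩
  rw [integral_normalizedWithDensity hp.integrable fun x => (hp.pos x).le,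
    integral_normalizedWithDensity hq.integrable fun x => (hq.pos x).le]
  exact close φ φ_abs φ_lip

end Caffarelli

/-! ### The local Lipschitz constant -/

section LocalLip

variable {X Y : Type*} [PseudoMetricSpace X] [PseudoMetricSpace Y] {f : X → ℝ} {x : X} {c : ℝ}

lemma localLip_eq_zero_of_nhdsNE_eq_bot (hx : 𝓝[≠] x = ⊥) : localLip f x = 0 := by
  simp [localLip, hx, limsup_eq]

lemma isBoundedUnder_abs_sub_div_dist (hf : LocallyLipschitz f) (x : X) :
    IsBoundedUnder (· ≤ ·) (𝓝[≠] x) fun y => |f y - f x| / dist y x := by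
  obtain ⟨K, t, ht, hK⟩ := hf x
  refine ⟨K, eventually_map.2 ?_⟩
  filter_upwards [nhdsWithin_le_nhds ht] with y hy
  exact div_le_of_le_mul₀ dist_nonneg K.2 (hK.dist_le_mul y hy x (mem_of_mem_nhds ht))

lemma localLip_nonneg (hf : LocallyLipschitz f) (x : X) : 0 ≤ localLip f x := by
  rcases eq_or_neBot (𝓝[≠] x) with isolated | _
  · exact (localLip_eq_zero_of_nhdsNE_eq_bot isolated).ge
  · exact le_limsup_of_frequently_le (Frequently.of_forall fun y => by positivity)
      (isBoundedUnder_abs_sub_div_dist hf x)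

lemma localLip_le (hc : 0 ≤ c) (h : ∀ᶠ y in 𝓝 x, |f y - f x| ≤ c * dist y x) :
    localLip f x ≤ c := by
  rcases eq_or_neBot (𝓝[≠] x) with isolated | _
  · rwa [localLip_eq_zero_of_nhdsNE_eq_bot isolated]
  · refine limsup_le_of_le (isCoboundedUnder_le_of_le _ (x := 0) fun y => by positivity) ?_
    filter_upwards [nhdsWithin_le_nhds h] with y hy
    exact div_le_of_le_mul₀ dist_nonneg hc hy

lemma eventually_abs_sub_le_of_localLip_lt (hf : LocallyLipschitz f) (h : localLip f x < c) :
    ∀ᶠ y in 𝓝 x, |f y - f x| ≤ c * dist y x := by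
  obtain ⟨K, t, ht, hK⟩ := hf x
  have slope_lt := eventually_nhdsWithin_iff.1
    (eventually_lt_of_limsup_lt h (isBoundedUnder_abs_sub_div_dist hf x))
  filter_upwards [slope_lt, ht] with y hy hyt
  rcases (dist_nonneg (x := y) (y := x)).eq_or_lt' with h0 | hpos
  · have := hK.dist_le_mul y hyt x (mem_of_mem_nhds ht)
    simpa [h0, Real.dist_eq] using this
  · exact (div_le_iff₀ hpos).1 (hy fun hyx => hpos.ne' (by simp_all)).le

lemma localLip_le_of_lipschitzWith {K : NNReal} (hf : LipschitzWith K f) (x : X) :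
    localLip f x ≤ K :=
  localLip_le K.2 (Eventually.of_forall fun y => hf.dist_le_mul y x)

lemma localLip_comp_le {g : Y → ℝ} (hg : LocallyLipschitz g) {T : X → Y} (hT : LipschitzWith 1 T)
    (x : X) : localLip (g ∘ T) x ≤ localLip g (T x) := by
  refine le_of_forall_gt_imp_ge_of_dense fun c hc => ?_
  have hc0 : 0 ≤ c := (localLip_nonneg hg (T x)).trans hc.le
  refine localLip_le hc0 ?_
  filter_upwards [hT.continuous.continuousAt.eventually
    (eventually_abs_sub_le_of_localLip_lt hg hc)] with y hy
  calc |g (T y) - g (T x)| ≤ c * dist (T y) (T x) := hy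
    _ ≤ c * dist y x := by gcongr; simpa using hT.dist_le_mul y x

variable {ι : Type*} [Fintype ι] {g : ι → X → ℝ}

lemma locallyLipschitz_sum_smul (hg : ∀ i, LocallyLipschitz (g i)) (a : ι → ℝ) :
    LocallyLipschitz (∑ i, a i • g i) :=
  Finset.sum_induction _ LocallyLipschitz (fun _ _ => .add) (.const 0) fun i _ =>
    (lipschitzWith_smul (a i)).locallyLipschitz.comp (hg i)

lemma localLip_sum_smul_le (hg : ∀ i, LocallyLipschitz (g i)) (a : ι → ℝ) (x : X) :
    localLip (∑ i, a i • g i) x ≤ ∑ i, |a i| * localLip (g i) x := by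
  have perturbed : ∀ ε > 0, localLip (∑ i, a i • g i) x ≤ ∑ i, |a i| * (localLip (g i) x + ε) := by
    refine fun ε hε => localLip_le (Finset.sum_nonneg fun i _ => ?_) ?_
    · have := localLip_nonneg (hg i) x
      positivity
    · have slopes : ∀ᶠ y in 𝓝 x, ∀ i, |g i y - g i x| ≤ (localLip (g i) x + ε) * dist y x :=
        eventually_all.2 fun i =>
          eventually_abs_sub_le_of_localLip_lt (hg i) (lt_add_of_pos_right _ hε)
      filter_upwards [slopes] with y hy
      simp only [Finset.sum_apply, Pi.smul_apply, smul_eq_mul, ← Finset.sum_sub_distrib, ← mul_sub,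
        Finset.sum_mul, mul_assoc]
      refine (Finset.abs_sum_le_sum_abs _ _).trans (Finset.sum_le_sum fun i _ => ?_)
      rw [abs_mul]
      exact mul_le_mul_of_nonneg_left (hy i) (abs_nonneg _)
  have limit : Tendsto (fun ε => ∑ i, |a i| * (localLip (g i) x + ε)) (𝓝[>] 0)
      (𝓝 (∑ i, |a i| * localLip (g i) x)) := by
    have cont : Continuous fun ε => ∑ i, |a i| * (localLip (g i) x + ε) := by fun_prop
    simpa using (cont.tendsto 0).mono_left nhdsWithin_le_nhds
  exact ge_of_tendsto limit (eventually_mem_nhdsWithin.mono perturbed)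

lemma sq_localLip_sum_smul_le (hg : ∀ i, LocallyLipschitz (g i)) (a : ι → ℝ) (x : X) :
    localLip (∑ i, a i • g i) x ^ 2 ≤ (∑ i, a i ^ 2) * ∑ i, localLip (g i) x ^ 2 :=
  calc localLip (∑ i, a i • g i) x ^ 2 ≤ (∑ i, |a i| * localLip (g i) x) ^ 2 :=
        pow_le_pow_left₀ (localLip_nonneg (locallyLipschitz_sum_smul hg a) x)
          (localLip_sum_smul_le hg a x) 2
    _ ≤ (∑ i, |a i| ^ 2) * ∑ i, localLip (g i) x ^ 2 := Finset.sum_mul_sq_le_sq_mul_sq _ _ _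
    _ = (∑ i, a i ^ 2) * ∑ i, localLip (g i) x ^ 2 := by simp only [sq_abs]

lemma localLip_lt_iff_exists_rat (hf : LocallyLipschitz f) :
    localLip f x < c ↔ ∃ q : {q : ℚ // (0 : ℝ) ≤ q ∧ (q : ℝ) < c}, ∃ m : ℕ,
      ∀ y, 1 / ((m : ℝ) + 1) ≤ dist y x ∨ |f y - f x| ≤ q * dist y x := by
  constructor
  · intro h
    obtain ⟨q, hq, hqc⟩ := exists_rat_btwn h
    obtain ⟨ε, hε, slope_le⟩ :=
      Metric.eventually_nhds_iff.1 (eventually_abs_sub_le_of_localLip_lt hf hq)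
    obtain ⟨m, hm⟩ := exists_nat_one_div_lt hε
    exact ⟨⟨q, (localLip_nonneg hf x).trans hq.le, hqc⟩, m, fun y =>
      (le_or_gt _ _).imp_right fun hy => slope_le (hy.trans hm)⟩
  · rintro ⟨⟨q, hq, hqc⟩, m, h⟩
    refine (localLip_le hq ?_).trans_lt hqc
    exact Metric.eventually_nhds_iff.2
      ⟨1 / ((m : ℝ) + 1), by positivity, fun y hy => (h y).resolve_left hy.not_ge⟩

lemma measurable_localLip [MeasurableSpace X] [OpensMeasurableSpace X] (hf : LocallyLipschitz f) :
    Measurable (localLip f) := by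
  have hfc := hf.continuous
  refine measurable_of_Iio fun c => ?_
  have sublevel_eq : localLip f ⁻¹' Set.Iio c =
      ⋃ q : {q : ℚ // (0 : ℝ) ≤ q ∧ (q : ℝ) < c}, ⋃ m : ℕ,
        ⋂ y, {x | 1 / ((m : ℝ) + 1) ≤ dist y x} ∪ {x | |f y - f x| ≤ q * dist y x} := by
    ext x
    simp only [Set.mem_preimage, Set.mem_Iio, localLip_lt_iff_exists_rat hf, Set.mem_iUnion,
      Set.mem_iInter, Set.mem_union, Set.mem_ofPred_eq]
  rw [sublevel_eq]
  refine .iUnion fun q => .iUnion fun m => (isClosed_iInter fun y => ?_).measurableSet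
  exact (isClosed_le (by fun_prop) (by fun_prop)).union (isClosed_le (by fun_prop) (by fun_prop))

end LocalLip

/-! ### The metric Sobolev space -/

lemma integral_comp_of_measurePreserving {α β : Type*} [MeasurableSpace α] [MeasurableSpace β]
    {μ : Measure α} {ν : Measure β} {T : α → β} {g : β → ℝ} (hg : AEStronglyMeasurable g ν)
    (hT : MeasurePreserving T μ ν) : ∫ x, g (T x) ∂μ = ∫ y, g y ∂ν := by
  rw [← hT.map_eq] at hg ⊢
  exact (integral_map hT.aemeasurable hg).symm

section Sobolev

variable {X Y : Type*} [PseudoMetricSpace X] [MeasurableSpace X] [OpensMeasurableSpace X]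
  [PseudoMetricSpace Y] [MeasurableSpace Y] [OpensMeasurableSpace Y]
  {μ : Measure X} {ν : Measure Y} {f : X → ℝ}

lemma memW12Lip_iff_integrable :
    memW12Lip μ f ↔ LocallyLipschitz f ∧ Integrable (fun x => f x ^ 2) μ ∧
      Integrable (fun x => localLip f x ^ 2) μ := by
  have integrable_sq_iff {g : X → ℝ} (hg : Measurable g) :
      Integrable (fun x => g x ^ 2) μ ↔ ∫⁻ x, ENNReal.ofReal (g x ^ 2) ∂μ < ⊤ := by
    rw [← hasFiniteIntegral_iff_ofReal (ae_of_all _ fun x => sq_nonneg (g x))]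
    exact and_iff_right (hg.pow_const 2).aestronglyMeasurable
  refine and_congr_right fun hf => ?_
  rw [ENNReal.add_lt_top, integrable_sq_iff hf.continuous.measurable,
    integrable_sq_iff (measurable_localLip hf)]

lemma memW12Lip.integrable_sq (hf : memW12Lip μ f) : Integrable (fun x => f x ^ 2) μ :=
  (memW12Lip_iff_integrable.1 hf).2.1

lemma memW12Lip.integrable_localLip_sq (hf : memW12Lip μ f) :
    Integrable (fun x => localLip f x ^ 2) μ :=
  (memW12Lip_iff_integrable.1 hf).2.2

lemma memW12Lip_of_lipschitzWith_of_bounded [IsFiniteMeasure μ] {K : NNReal} {C : ℝ}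
    (hf : LipschitzWith K f) (hC : ∀ x, |f x| ≤ C) : memW12Lip μ f := by
  have hloc := hf.locallyLipschitz
  have integrable_sq {g : X → ℝ} (D : ℝ) (hg : Measurable g) (hD : ∀ x, |g x| ≤ D) :
      Integrable (fun x => g x ^ 2) μ :=
    .of_bound (hg.pow_const 2).aestronglyMeasurable (D ^ 2) <| ae_of_all _ fun x => by
      rw [norm_pow]
      exact pow_le_pow_left₀ (norm_nonneg _) (hD x) 2
  refine memW12Lip_iff_integrable.2 ⟨hloc, integrable_sq C hloc.continuous.measurable hC,
    integrable_sq K (measurable_localLip hloc) fun x => ?_⟩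
  rw [abs_of_nonneg (localLip_nonneg hloc x)]
  exact localLip_le_of_lipschitzWith hf x

lemma memW12Lip_sum_smul {ι : Type*} [Fintype ι] {g : ι → X → ℝ} (hg : ∀ i, memW12Lip μ (g i))
    (a : ι → ℝ) : memW12Lip μ (∑ i, a i • g i) := by
  have hloc := locallyLipschitz_sum_smul (fun i => (hg i).1) a
  refine memW12Lip_iff_integrable.2 ⟨hloc, ?_, ?_⟩
  · refine ((integrable_finsetSum Finset.univ fun i _ => (hg i).integrable_sq).const_mul
      (∑ i, a i ^ 2)).mono' (hloc.continuous.measurable.pow_const 2).aestronglyMeasurable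
      (ae_of_all _ fun x => ?_)
    simpa using Finset.sum_mul_sq_le_sq_mul_sq Finset.univ a fun i => g i x
  · refine ((integrable_finsetSum Finset.univ fun i _ => (hg i).integrable_localLip_sq).const_mul
      (∑ i, a i ^ 2)).mono' ((measurable_localLip hloc).pow_const 2).aestronglyMeasurable
      (ae_of_all _ fun x => ?_)
    simpa using sq_localLip_sum_smul_le (fun i => (hg i).1) a x

variable {T : X → Y} {g : Y → ℝ}

lemma memW12Lip.comp (hg : memW12Lip ν g) (hT : LipschitzWith 1 T)
    (hTm : MeasurePreserving T μ ν) : memW12Lip μ (g ∘ T) := by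
  have hloc := hg.1.comp hT.locallyLipschitz
  refine memW12Lip_iff_integrable.2
    ⟨hloc, hTm.integrable_comp_of_integrable hg.integrable_sq, ?_⟩
  refine (hTm.integrable_comp_of_integrable hg.integrable_localLip_sq).mono'
    ((measurable_localLip hloc).pow_const 2).aestronglyMeasurable (ae_of_all _ fun x => ?_)
  rw [norm_pow, Real.norm_of_nonneg (localLip_nonneg hloc x)]
  exact pow_le_pow_left₀ (localLip_nonneg hloc x) (localLip_comp_le hg.1 hT x) 2

lemma integral_sq_localLip_comp_le (hg : memW12Lip ν g) (hT : LipschitzWith 1 T)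
    (hTm : MeasurePreserving T μ ν) :
    ∫ x, localLip (g ∘ T) x ^ 2 ∂μ ≤ ∫ y, localLip g y ^ 2 ∂ν := by
  have hcomp := hg.comp hT hTm
  calc ∫ x, localLip (g ∘ T) x ^ 2 ∂μ ≤ ∫ x, localLip g (T x) ^ 2 ∂μ :=
        integral_mono hcomp.integrable_localLip_sq
          (hTm.integrable_comp_of_integrable hg.integrable_localLip_sq) fun x =>
          pow_le_pow_left₀ (localLip_nonneg hcomp.1 x) (localLip_comp_le hg.1 hT x) 2
    _ = ∫ y, localLip g y ^ 2 ∂ν :=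
        integral_comp_of_measurePreserving hg.integrable_localLip_sq.aestronglyMeasurable hTm

end Sobolev

section TentFunctions

variable {X : Type*} [PseudoMetricSpace X]

/-- The tent function of height `1` and radius `δ` centered at `p`. Disjointly supported tents span
the finite-dimensional subspaces witnessing that the infimum defining `lambdaLip` is not vacuous. -/
noncomputable def tent (δ : ℝ) (p x : X) : ℝ := max 0 (1 - dist x p / δ)

variable {δ : ℝ} {p x : X}

lemma abs_tent_le_one (hδ : 0 < δ) : |tent δ p x| ≤ 1 := by
  rw [tent, abs_of_nonneg (le_max_left _ _)]
  exact max_le zero_le_one (sub_le_self _ (by positivity))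

lemma lipschitzWith_tent (δ : ℝ) (p : X) : LipschitzWith ‖δ⁻¹‖₊ (tent δ p) := by
  have slope : LipschitzWith ‖δ⁻¹‖₊ fun x => 1 - dist x p / δ := by
    simpa [Function.comp_def, div_eq_inv_mul] using (LipschitzWith.const (1 : ℝ)).sub
      ((lipschitzWith_smul δ⁻¹).comp (LipschitzWith.dist_left p))
  exact slope.const_max 0

lemma tent_eq_zero (hδ : 0 < δ) (h : δ ≤ dist x p) : tent δ p x = 0 :=
  max_eq_left (sub_nonpos.2 ((one_le_div hδ).2 h))

lemma linearIndependent_tent {ι : Type*} [Finite ι] (hδ : 0 < δ) {p : ι → X}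
    (hp : Pairwise fun i j => δ ≤ dist (p i) (p j)) :
    LinearIndependent ℝ fun i => tent δ (p i) := by
  have := Fintype.ofFinite ι
  refine Fintype.linearIndependent_iff.2 fun a ha i => ?_
  have hai := congrFun ha (p i)
  rw [Finset.sum_apply, Finset.sum_eq_single i
    (fun j _ hj => by simp [tent_eq_zero hδ (hp hj.symm)]) (by simp)] at hai
  simpa [tent] using hai

end TentFunctions

section Existence

variable {X : Type*} [MetricSpace X]

lemma exists_pos_pairwise_le_dist {ι : Type*} [Finite ι] {p : ι → X} (hp : Function.Injective p) :
    ∃ δ > 0, Pairwise fun i j => δ ≤ dist (p i) (p j) := by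
  have small : ∀ᶠ δ in 𝓝[>] (0 : ℝ), ∀ i j, i ≠ j → δ ≤ dist (p i) (p j) :=
    eventually_all.2 fun i => eventually_all.2 fun j => eventually_imp_distrib_left.2 fun hij =>
      nhdsWithin_le_nhds (Iic_mem_nhds (dist_pos.2 (hp.ne hij)))
  obtain ⟨δ, h, hδ⟩ := (small.and self_mem_nhdsWithin).exists
  exact ⟨δ, hδ, h⟩

lemma exists_finrank_eq_forall_memW12Lip [Infinite X] [MeasurableSpace X] [OpensMeasurableSpace X]
    (μ : Measure X) [IsFiniteMeasure μ] (k : ℕ) :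
    ∃ F : Submodule ℝ (X → ℝ), Module.finrank ℝ F = k ∧ ∀ f ∈ F, memW12Lip μ f := by
  let p (i : Fin k) : X := Infinite.natEmbedding X i
  have p_injective : Function.Injective p :=
    (Infinite.natEmbedding X).injective.comp Fin.val_injective
  obtain ⟨δ, hδ, separated⟩ := exists_pos_pairwise_le_dist p_injective
  refine ⟨Submodule.span ℝ (Set.range fun i => tent δ (p i)), ?_, fun f hf => ?_⟩
  · rw [finrank_span_eq_card (linearIndependent_tent hδ separated), Fintype.card_fin]
  · obtain ⟨a, rfl⟩ := (Submodule.mem_span_range_iff_exists_fun ℝ).1 hf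
    exact memW12Lip_sum_smul (fun i => memW12Lip_of_lipschitzWith_of_bounded
      (lipschitzWith_tent δ _) fun x => abs_tent_le_one hδ) a

end Existence

/-! ### Metric eigenvalues and contractions -/

section Rayleigh

variable {X : Type*} [PseudoMetricSpace X] [MeasurableSpace X] {μ : Measure X}
  {F : Submodule ℝ (X → ℝ)} {f : X → ℝ} {k : ℕ}

/-- The supremum over `F` of the Rayleigh quotients `∫ |∇f|² / ∫ f²` in the definition of
`lambdaLip`. As a real supremum it would be `0` if the quotients were unbounded;
`div_le_rayleighSup` excludes this for finite-dimensional `F`. -/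
noncomputable def rayleighSup (μ : Measure X) (F : Submodule ℝ (X → ℝ)) : ℝ :=
  sSup {r : ℝ | ∃ f ∈ F, (∫ x, (f x) ^ 2 ∂μ) ≠ 0 ∧
    r = (∫ x, (localLip f x) ^ 2 ∂μ) / (∫ x, (f x) ^ 2 ∂μ)}

lemma lambdaLip_eq_sInf_rayleighSup (μ : Measure X) (k : ℕ) :
    lambdaLip μ k = sInf {a : ℝ | ∃ F : Submodule ℝ (X → ℝ), Module.finrank ℝ F = k ∧
      (∀ f ∈ F, memW12Lip μ f) ∧ a = rayleighSup μ F} :=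
  rfl

lemma rayleighSup_nonneg (μ : Measure X) (F : Submodule ℝ (X → ℝ)) : 0 ≤ rayleighSup μ F := by
  refine Real.sSup_nonneg ?_
  rintro r ⟨f, -, -, rfl⟩
  exact div_nonneg (integral_nonneg fun x => sq_nonneg _) (integral_nonneg fun x => sq_nonneg _)

lemma lambdaLip_le_rayleighSup (hF : ∀ f ∈ F, memW12Lip μ f) (hk : Module.finrank ℝ F = k) :
    lambdaLip μ k ≤ rayleighSup μ F := by
  refine csInf_le ⟨0, ?_⟩ ⟨F, hk, hF, rfl⟩
  rintro r ⟨G, -, -, rfl⟩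
  exact rayleighSup_nonneg μ G

lemma rayleighSup_smul_measure {c : ℝ≥0∞} (hc : c ≠ 0) (hc' : c ≠ ⊤) (μ : Measure X)
    (F : Submodule ℝ (X → ℝ)) : rayleighSup (c • μ) F = rayleighSup μ F := by
  have hc0 : c.toReal ≠ 0 := ENNReal.toReal_ne_zero.2 ⟨hc, hc'⟩
  simp only [rayleighSup, integral_smul_measure, smul_eq_mul, mul_div_mul_left _ _ hc0, ne_eq,
    mul_eq_zero, hc0, false_or]

lemma memW12Lip_smul_measure_iff {c : ℝ≥0∞} (hc : c ≠ 0) (hc' : c ≠ ⊤) :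
    memW12Lip (c • μ) f ↔ memW12Lip μ f := by
  rw [memW12Lip, memW12Lip, lintegral_smul_measure, lintegral_smul_measure, smul_eq_mul,
    smul_eq_mul, ← mul_add, lt_top_iff_ne_top, lt_top_iff_ne_top, ne_eq, ne_eq,
    ENNReal.mul_eq_top]
  simp only [ne_eq, hc, hc', not_false_eq_true, true_and, false_and, or_false]

lemma lambdaLip_smul_measure {c : ℝ≥0∞} (hc : c ≠ 0) (hc' : c ≠ ⊤) (μ : Measure X) (k : ℕ) :
    lambdaLip (c • μ) k = lambdaLip μ k := by
  simp only [lambdaLip_eq_sInf_rayleighSup, memW12Lip_smul_measure_iff hc hc',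
    rayleighSup_smul_measure hc hc']

end Rayleigh

section L2

variable {α : Type*} [MeasurableSpace α] {μ : Measure α} {F : Submodule ℝ (α → ℝ)}

/-- The linear map sending a square-integrable function in `F` to its class in `L²`. -/
noncomputable def toL2 (F : Submodule ℝ (α → ℝ)) (hF : ∀ f ∈ F, MemLp f 2 μ) :
    F →ₗ[ℝ] Lp ℝ 2 μ where
  toFun f := (hF f f.2).toLp _
  map_add' _ _ := rfl
  map_smul' _ _ := rfl

lemma norm_toL2_sq (hF : ∀ f ∈ F, MemLp f 2 μ) (f : F) :
    ‖toL2 F hF f‖ ^ 2 = ∫ x, (f : α → ℝ) x ^ 2 ∂μ := by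
  rw [← real_inner_self_eq_norm_sq, L2.inner_def]
  refine integral_congr_ae ?_
  have coeFn : toL2 F hF f =ᵐ[μ] (f : α → ℝ) := (hF f f.2).coeFn_toLp
  filter_upwards [coeFn] with x hx
  simp [hx, sq]

variable [TopologicalSpace α] [μ.IsOpenPosMeasure]

lemma toL2_injective (hF : ∀ f ∈ F, MemLp f 2 μ) (hcont : ∀ f ∈ F, Continuous f) :
    Function.Injective (toL2 F hF) := fun f g hfg =>
  Subtype.ext <| (Continuous.ae_eq_iff_eq μ (hcont f f.2) (hcont g g.2)).1 <|
    (MemLp.toLp_eq_toLp_iff (hF f f.2) (hF g g.2)).1 hfg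

lemma exists_sum_sq_equivFun_le_integral {ι : Type*} [Fintype ι]
    (b : Module.Basis ι ℝ F) (hF : ∀ f ∈ F, MemLp f 2 μ) (hcont : ∀ f ∈ F, Continuous f) :
    ∃ C, ∀ f : F, ∑ i, b.equivFun f i ^ 2 ≤ C * ∫ x, (f : α → ℝ) x ^ 2 ∂μ := by
  let Φ : EuclideanSpace ℝ ι →ₗ[ℝ] Lp ℝ 2 μ :=
    toL2 F hF ∘ₗ (b.equivFun.symm.toLinearMap ∘ₗ (WithLp.linearEquiv 2 ℝ (ι → ℝ)).toLinearMap)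
  have ker_eq_bot : LinearMap.ker Φ = ⊥ := LinearMap.ker_eq_bot.2 <|
    (toL2_injective hF hcont).comp <|
      b.equivFun.symm.injective.comp (WithLp.linearEquiv 2 ℝ (ι → ℝ)).injective
  obtain ⟨K, -, hK⟩ := Φ.exists_antilipschitzWith ker_eq_bot
  refine ⟨K ^ 2, fun f => ?_⟩
  have bound : ‖WithLp.toLp 2 (b.equivFun f)‖ ≤ K * ‖toL2 F hF f‖ := by
    simpa [Φ] using hK.le_mul_dist (WithLp.toLp 2 (b.equivFun f)) 0
  calc ∑ i, b.equivFun f i ^ 2 = ‖WithLp.toLp 2 (b.equivFun f)‖ ^ 2 := by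
        simp [EuclideanSpace.norm_sq_eq]
    _ ≤ (K * ‖toL2 F hF f‖) ^ 2 := pow_le_pow_left₀ (norm_nonneg _) bound 2
    _ = K ^ 2 * ∫ x, (f : α → ℝ) x ^ 2 ∂μ := by rw [mul_pow, norm_toL2_sq]

end L2

section FiniteDimensional

variable {X : Type*} [PseudoMetricSpace X] [MeasurableSpace X] [OpensMeasurableSpace X]
  {μ : Measure X} [μ.IsOpenPosMeasure] {F : Submodule ℝ (X → ℝ)} [FiniteDimensional ℝ F]

lemma exists_integral_sq_localLip_le (hF : ∀ f ∈ F, memW12Lip μ f) :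
    ∃ C, ∀ f ∈ F, ∫ x, localLip f x ^ 2 ∂μ ≤ C * ∫ x, f x ^ 2 ∂μ := by
  have memLp : ∀ f ∈ F, MemLp f 2 μ := fun f hf =>
    (memLp_two_iff_integrable_sq (hF f hf).1.continuous.aestronglyMeasurable).2
      (hF f hf).integrable_sq
  let b := Module.finBasis ℝ F
  obtain ⟨C, hC⟩ := exists_sum_sq_equivFun_le_integral b memLp
    fun f hf => (hF f hf).1.continuous
  let energy (x : X) : ℝ := ∑ i, localLip (b i : X → ℝ) x ^ 2
  have energy_integrable : Integrable energy μ :=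
    integrable_finsetSum _ fun i _ => (hF _ (b i).2).integrable_localLip_sq
  have energy_nonneg : 0 ≤ ∫ x, energy x ∂μ :=
    integral_nonneg fun x => Finset.sum_nonneg fun i _ => sq_nonneg _
  refine ⟨C * ∫ x, energy x ∂μ, fun f hf => ?_⟩
  let a := b.equivFun ⟨f, hf⟩
  have expansion : f = ∑ i, a i • (b i : X → ℝ) := by
    simpa only [Submodule.coe_sum, Submodule.coe_smul] using
      (congrArg Subtype.val (b.sum_equivFun ⟨f, hf⟩)).symm
  have pointwise (x : X) : localLip f x ^ 2 ≤ (∑ i, a i ^ 2) * energy x := by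
    rw [expansion]
    exact sq_localLip_sum_smul_le (fun i => (hF _ (b i).2).1) a x
  calc ∫ x, localLip f x ^ 2 ∂μ ≤ ∫ x, (∑ i, a i ^ 2) * energy x ∂μ :=
        integral_mono (hF f hf).integrable_localLip_sq (energy_integrable.const_mul _) pointwise
    _ = (∑ i, a i ^ 2) * ∫ x, energy x ∂μ := integral_const_mul _ _
    _ ≤ C * (∫ x, f x ^ 2 ∂μ) * ∫ x, energy x ∂μ :=
        mul_le_mul_of_nonneg_right (hC ⟨f, hf⟩) energy_nonneg
    _ = C * (∫ x, energy x ∂μ) * ∫ x, f x ^ 2 ∂μ := mul_right_comm _ _ _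

lemma div_le_rayleighSup
    (hF : ∀ f ∈ F, memW12Lip μ f) {f : X → ℝ} (hf : f ∈ F) (h0 : ∫ x, f x ^ 2 ∂μ ≠ 0) :
    (∫ x, localLip f x ^ 2 ∂μ) / ∫ x, f x ^ 2 ∂μ ≤ rayleighSup μ F := by
  obtain ⟨C, hC⟩ := exists_integral_sq_localLip_le hF
  refine le_csSup ⟨C, ?_⟩ ⟨f, hf, h0, rfl⟩
  rintro r ⟨g, hg, hg0, rfl⟩
  exact (div_le_iff₀ ((integral_nonneg fun x => sq_nonneg _).lt_of_ne' hg0)).2 (hC g hg)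

end FiniteDimensional

section Contraction

variable {X Y : Type*} [MeasurableSpace X] [MeasurableSpace Y] {ν : Measure X} {μ : Measure Y}
  {T : X → Y} {F : Submodule ℝ (Y → ℝ)}

lemma finrank_map_funLeft_of_measurePreserving [TopologicalSpace Y] [OpensMeasurableSpace Y]
    [μ.IsOpenPosMeasure] (hTm : MeasurePreserving T ν μ) (hF : ∀ f ∈ F, Continuous f) :
    Module.finrank ℝ (F.map (LinearMap.funLeft ℝ ℝ T)) = Module.finrank ℝ F := by
  have injective : Function.Injective ((LinearMap.funLeft ℝ ℝ T).domRestrict F) := by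
    intro f g hfg
    have hf := hF f f.2
    have hg := hF g g.2
    have ae_eq : (f : Y → ℝ) =ᵐ[ν.map T] g :=
      (ae_map_iff hTm.aemeasurable (measurableSet_eq_fun hf.measurable hg.measurable)).2 <|
        ae_of_all _ (congrFun hfg)
    rw [hTm.map_eq] at ae_eq
    exact Subtype.ext ((Continuous.ae_eq_iff_eq μ hf hg).1 ae_eq)
  rw [← LinearMap.range_domRestrict, LinearMap.finrank_range_of_inj injective]

variable [PseudoMetricSpace X] [OpensMeasurableSpace X]

lemma rayleighSup_map_funLeft_le [PseudoMetricSpace Y] [OpensMeasurableSpace Y]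
    [μ.IsOpenPosMeasure] [FiniteDimensional ℝ F] (hT : LipschitzWith 1 T)
    (hTm : MeasurePreserving T ν μ) (hF : ∀ f ∈ F, memW12Lip μ f) :
    rayleighSup ν (F.map (LinearMap.funLeft ℝ ℝ T)) ≤ rayleighSup μ F := by
  refine Real.sSup_le ?_ (rayleighSup_nonneg μ F)
  rintro r ⟨-, ⟨f, hf, rfl⟩, hne, rfl⟩
  have integral_sq_eq : ∫ x, LinearMap.funLeft ℝ ℝ T f x ^ 2 ∂ν = ∫ y, f y ^ 2 ∂μ :=
    integral_comp_of_measurePreserving (hF f hf).integrable_sq.aestronglyMeasurable hTm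
  rw [integral_sq_eq] at hne ⊢
  refine le_trans ?_ (div_le_rayleighSup hF hf hne)
  exact div_le_div_of_nonneg_right (integral_sq_localLip_comp_le (hF f hf) hT hTm)
    (integral_nonneg fun y => sq_nonneg _)

theorem lambdaLip_le_of_lipschitzWith_one_of_measurePreserving [MetricSpace Y] [Infinite Y]
    [OpensMeasurableSpace Y] [IsFiniteMeasure μ] [μ.IsOpenPosMeasure] (hT : LipschitzWith 1 T)
    (hTm : MeasurePreserving T ν μ) {k : ℕ} (hk : 1 ≤ k) : lambdaLip ν k ≤ lambdaLip μ k := by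
  obtain ⟨F₀, hF₀k, hF₀⟩ := exists_finrank_eq_forall_memW12Lip μ k
  refine le_csInf ⟨_, F₀, hF₀k, hF₀, rfl⟩ ?_
  rintro a ⟨F, hFk, hF, rfl⟩
  have : FiniteDimensional ℝ F := Module.finite_of_finrank_pos (by lia)
  refine (lambdaLip_le_rayleighSup ?_ ?_).trans (rayleighSup_map_funLeft_le hT hTm hF)
  · rintro - ⟨f, hf, rfl⟩
    exact (hF f hf).comp hT hTm
  · rw [finrank_map_funLeft_of_measurePreserving hTm fun f hf => (hF f hf).1.continuous, hFk]

end Contraction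

/-! ### Spectral comparison -/

section Comparison

section NormalizedWithDensity

variable {α : Type*} [MeasurableSpace α] {μ : Measure α} {h : α → ℝ}

lemma isOpenPosMeasure_normalizedWithDensity [TopologicalSpace α] [μ.IsOpenPosMeasure]
    (h_int : Integrable h μ) (h_pos : ∀ x, 0 < h x) :
    (normalizedWithDensity μ h).IsOpenPosMeasure := by
  have : IsFiniteMeasure (μ.withDensity fun x => ENNReal.ofReal (h x)) :=
    isFiniteMeasure_withDensity_ofReal h_int.2
  have := (absolutelyContinuous_withDensity_ofReal h_int.aemeasurable h_pos).isOpenPosMeasure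
  exact Measure.isOpenPosMeasure_smul _ (ENNReal.inv_ne_zero.2 (measure_ne_top _ _))

lemma lambdaLip_normalizedWithDensity [PseudoMetricSpace α] [NeZero μ] (h_int : Integrable h μ)
    (h_pos : ∀ x, 0 < h x) (k : ℕ) :
    lambdaLip (normalizedWithDensity μ h) k =
      lambdaLip (μ.withDensity fun x => ENNReal.ofReal (h x)) k := by
  have : IsFiniteMeasure (μ.withDensity fun x => ENNReal.ofReal (h x)) :=
    isFiniteMeasure_withDensity_ofReal h_int.2
  have := neZero_withDensity_ofReal h_int.aemeasurable h_pos
  exact lambdaLip_smul_measure (ENNReal.inv_ne_zero.2 (measure_ne_top _ _))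
    (ENNReal.inv_ne_top.2 (NeZero.ne _)) _ k

end NormalizedWithDensity

variable {E : Type*} [NormedAddCommGroup E] [InnerProductSpace ℝ E] [FiniteDimensional ℝ E]
  [Nontrivial E] [MeasurableSpace E] [BorelSpace E] {ρ : ℝ} {k : ℕ}

lemma lambdaLip_normalizedWithDensity_le_of_log {p q : E → ℝ} (hρ : 0 < ρ)
    (hp : IsGaussianDominated p) (hq : IsGaussianDominated q)
    (log_p : StrongConvexOn Set.univ (-ρ) fun x => Real.log (p x))
    (log_q : StrongConcaveOn Set.univ ρ fun x => Real.log (q x)) (hk : 1 ≤ k) :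
    lambdaLip (normalizedWithDensity volume p) k ≤
      lambdaLip (normalizedWithDensity volume q) k := by
  obtain ⟨T, hT, hmap⟩ :=
    exists_lipschitzWith_one_map_normalizedWithDensity_eq hρ hp hq log_p log_q
  have : Infinite E := Module.Free.infinite ℝ E
  have := isProbabilityMeasure_normalizedWithDensity hq.integrable hq.pos
  have := isOpenPosMeasure_normalizedWithDensity hq.integrable hq.pos
  exact lambdaLip_le_of_lipschitzWith_one_of_measurePreserving hT
    ⟨hT.continuous.measurable, hmap⟩ hk

theorem spectral_comparison_log_concave_general (hρ : 0 < ρ) {V : E → ℝ}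
    (hV : StrongConvexOn Set.univ ρ V) (hk : 1 ≤ k) :
    lambdaLip (normalizedWithDensity volume fun x : E => Real.exp (-ρ * ‖x‖ ^ 2 / 2)) k ≤
      lambdaLip (volume.withDensity fun x => ENNReal.ofReal (Real.exp (-(V x)))) k := by
  have gaussian : IsGaussianDominated fun x : E => Real.exp (-ρ * ‖x‖ ^ 2 / 2) := by
    simpa only [neg_mul, neg_div, div_mul_eq_mul_div] using
      IsGaussianDominated.exp_neg_mul_sq_norm (E := E) (half_pos hρ)
  have weight := isGaussianDominated_exp_neg_of_strongConvexOn hρ hV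
  have log_weight : StrongConcaveOn Set.univ ρ fun x => Real.log (Real.exp (-V x)) := by
    simp only [Real.log_exp]
    exact hV.neg
  rw [← lambdaLip_normalizedWithDensity weight.integrable weight.pos]
  exact lambdaLip_normalizedWithDensity_le_of_log hρ gaussian weight
    (strongConvexOn_log_exp_neg_mul_sq_norm ρ) log_weight hk

end Comparison

/-- **Spectral comparison for positively curved Euclidean weighted spaces**
(Caffarelli + Contraction Principle): if `μ = exp(-V) dx` with `V` smooth and
`∇²V ≥ ρ·Id` (i.e. `x ↦ V(x) - (ρ/2)|x|²` convex), `ρ > 0`, then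
`λ_k^Lip(ℝⁿ,|·|,μ) ≥ λ_k^Lip(ℝⁿ,|·|,γ_ρⁿ)` for all `k ≥ 1`. -/
theorem spectral_comparison_log_concave
    (n : ℕ) (hn : 1 ≤ n) (ρ : ℝ) (hρ : 0 < ρ)
    (V : EuclideanSpace ℝ (Fin n) → ℝ) (hV : ContDiff ℝ (⊤ : ℕ∞) V)
    (hconv : ConvexOn ℝ Set.univ (fun x : EuclideanSpace ℝ (Fin n) => V x - ρ / 2 * ‖x‖ ^ 2))
    (μ : Measure (EuclideanSpace ℝ (Fin n)))
    (hμ : μ = volume.withDensity fun x => ENNReal.ofReal (Real.exp (-(V x))))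
    (k : ℕ) (hk : 1 ≤ k) :
    lambdaLip (gaussRho n ρ) k ≤ lambdaLip μ k := by
  have : Nonempty (Fin n) := Fin.pos_iff_nonempty.1 hn
  exact hμ ▸ spectral_comparison_log_concave_general hρ (strongConvexOn_iff_convex.2 hconv) hk
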